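/- arXiv:2207.06129 — 2 statements merged into one kernel-verified Lean document; each statement's English description precedes it below -/
import Mathlib

section
/- Let 0 < α < n, 1/q = 1 − α/n, and w ∈ A_{1,q}. Then there exists a constant C > 0, independent of f, a, and r, such that for every a ∈ ℝⁿ, r > 0, and f ∈ L^{1,w}_loc: ‖I_α f‖_{WL^{q,w^q}(B(a,r))} ≤ C·w^q(B(a,r))^{1/q}·∫_r^∞ w^q(B(a,s))^{-1/q} ‖f‖_{L^{1,w}(B(a,s))} ds/s, where w^q(B) = ∫_B w(x)^q dx. -/
open MeasureTheory Metric Set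
open scoped ENNReal

noncomputable section

/-- The weighted measure of a set: `w(E) = ∫_E w(x) dx`, valued in `ℝ≥0∞`. -/
def wSet {n : ℕ} (w : EuclideanSpace ℝ (Fin n) → ℝ)
    (E : Set (EuclideanSpace ℝ (Fin n))) : ℝ≥0∞ :=
  ∫⁻ x in E, ENNReal.ofReal (w x)

/-- The weighted Lebesgue norm `‖f‖_{L^{p,w}(Ω)} = (∫_Ω |f(x)|^p w(x) dx)^{1/p}`. -/
def wLp {n : ℕ} (p : ℝ) (w f : EuclideanSpace ℝ (Fin n) → ℝ)
    (Ω : Set (EuclideanSpace ℝ (Fin n))) : ℝ≥0∞ :=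
  (∫⁻ x in Ω, ENNReal.ofReal |f x| ^ p * ENNReal.ofReal (w x)) ^ (1 / p)

/-- The weighted Lebesgue norm for an `ℝ≥0∞`-valued function. -/
def wLpE {n : ℕ} (p : ℝ) (w : EuclideanSpace ℝ (Fin n) → ℝ)
    (g : EuclideanSpace ℝ (Fin n) → ℝ≥0∞) (Ω : Set (EuclideanSpace ℝ (Fin n))) : ℝ≥0∞ :=
  (∫⁻ x in Ω, g x ^ p * ENNReal.ofReal (w x)) ^ (1 / p)

/-- The weak weighted Lebesgue norm `‖f‖_{WL^{p,w}(Ω)} = sup_{γ>0} γ·w({x ∈ Ω : |f(x)| > γ})^{1/p}`. -/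
def wWeakLp {n : ℕ} (p : ℝ) (w f : EuclideanSpace ℝ (Fin n) → ℝ)
    (Ω : Set (EuclideanSpace ℝ (Fin n))) : ℝ≥0∞ :=
  ⨆ γ : Set.Ioi (0 : ℝ),
    ENNReal.ofReal γ.1 * (wSet w {x | x ∈ Ω ∧ γ.1 < |f x|}) ^ (1 / p)

/-- The weak weighted Lebesgue norm for an `ℝ≥0∞`-valued function. -/
def wWeakLpE {n : ℕ} (p : ℝ) (w : EuclideanSpace ℝ (Fin n) → ℝ)
    (g : EuclideanSpace ℝ (Fin n) → ℝ≥0∞) (Ω : Set (EuclideanSpace ℝ (Fin n))) : ℝ≥0∞ :=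
  ⨆ γ : Set.Ioi (0 : ℝ),
    ENNReal.ofReal γ.1 * (wSet w {x | x ∈ Ω ∧ ENNReal.ofReal γ.1 < g x}) ^ (1 / p)

/-- `f ∈ L^{p,w}_loc`: `f` is measurable and `‖f‖_{L^{p,w}(B)} < ∞` on every ball. -/
def MemLocWLp {n : ℕ} (p : ℝ) (w f : EuclideanSpace ℝ (Fin n) → ℝ) : Prop :=
  Measurable f ∧ ∀ (a : EuclideanSpace ℝ (Fin n)) (r : ℝ), 0 < r → wLp p w f (ball a r) < ⊤

/-- A weight: nonnegative, measurable, locally integrable, positive a.e. -/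
def IsWeight {n : ℕ} (w : EuclideanSpace ℝ (Fin n) → ℝ) : Prop :=
  Measurable w ∧ (∀ x, 0 ≤ w x) ∧ LocallyIntegrable w volume ∧ ∀ᵐ x ∂volume, 0 < w x

/-- The Muckenhoupt class `A_p` for `1 < p`. -/
def MuckAp {n : ℕ} (p : ℝ) (w : EuclideanSpace ℝ (Fin n) → ℝ) : Prop :=
  ∃ C : ℝ, 0 < C ∧ ∀ (a : EuclideanSpace ℝ (Fin n)) (r : ℝ), 0 < r →
    ((volume (ball a r))⁻¹ * ∫⁻ x in ball a r, ENNReal.ofReal (w x)) *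
      ((volume (ball a r))⁻¹ *
        ∫⁻ x in ball a r, ENNReal.ofReal (w x ^ (-(1 / (p - 1))))) ^ (p - 1) ≤
      ENNReal.ofReal C

/-- The Muckenhoupt class `A_1`. -/
def MuckA1 {n : ℕ} (w : EuclideanSpace ℝ (Fin n) → ℝ) : Prop :=
  ∃ C : ℝ, 0 < C ∧ ∀ (a : EuclideanSpace ℝ (Fin n)) (r : ℝ), 0 < r →
    ((volume (ball a r))⁻¹ * ∫⁻ x in ball a r, ENNReal.ofReal (w x)) *
      essSup (fun x => ENNReal.ofReal (w x)⁻¹) (volume.restrict (ball a r)) ≤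
      ENNReal.ofReal C

/-- The class `A_{p,q}` for `1 < p`, where `p'` is the conjugate exponent of `p`. -/
def MuckApq {n : ℕ} (p q p' : ℝ) (w : EuclideanSpace ℝ (Fin n) → ℝ) : Prop :=
  ∃ C : ℝ, 0 < C ∧ ∀ (a : EuclideanSpace ℝ (Fin n)) (r : ℝ), 0 < r →
    ((volume (ball a r))⁻¹ * ∫⁻ x in ball a r, ENNReal.ofReal (w x ^ q)) ^ (1 / q) *
      ((volume (ball a r))⁻¹ * ∫⁻ x in ball a r, ENNReal.ofReal (w x ^ (-p'))) ^ (1 / p') ≤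
      ENNReal.ofReal C

/-- The class `A_{1,q}`. -/
def MuckA1q {n : ℕ} (q : ℝ) (w : EuclideanSpace ℝ (Fin n) → ℝ) : Prop :=
  ∃ C : ℝ, 0 < C ∧ ∀ (a : EuclideanSpace ℝ (Fin n)) (r : ℝ), 0 < r →
    ((volume (ball a r))⁻¹ * ∫⁻ x in ball a r, ENNReal.ofReal (w x ^ q)) ^ (1 / q) *
      essSup (fun x => ENNReal.ofReal (w x)⁻¹) (volume.restrict (ball a r)) ≤
      ENNReal.ofReal C

/-- The Hardy–Littlewood maximal operator. -/
def HLMax {n : ℕ} (f : EuclideanSpace ℝ (Fin n) → ℝ)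
    (x : EuclideanSpace ℝ (Fin n)) : ℝ≥0∞ :=
  ⨆ r : Set.Ioi (0 : ℝ), (volume (ball x r.1))⁻¹ * ∫⁻ y in ball x r.1, ENNReal.ofReal |f y|

/-- The fractional integral operator `I_α` (applied to `|f|`, valued in `ℝ≥0∞`). -/
def fracIntE {n : ℕ} (α : ℝ) (f : EuclideanSpace ℝ (Fin n) → ℝ)
    (x : EuclideanSpace ℝ (Fin n)) : ℝ≥0∞ :=
  ∫⁻ y, ENNReal.ofReal |f y| / ENNReal.ofReal (dist x y ^ ((n : ℝ) - α))

/-- The fractional maximal operator `M_α`. -/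
def fracMax {n : ℕ} (α : ℝ) (f : EuclideanSpace ℝ (Fin n) → ℝ)
    (x : EuclideanSpace ℝ (Fin n)) : ℝ≥0∞ :=
  ⨆ r : Set.Ioi (0 : ℝ),
    (volume (ball x r.1)) ^ (α / (n : ℝ) - 1) * ∫⁻ y in ball x r.1, ENNReal.ofReal |f y|

/-- The generalized weighted Morrey norm `‖f‖_{M^{p,w}_ψ}`. -/
def morreyNorm {n : ℕ} (p : ℝ) (w : EuclideanSpace ℝ (Fin n) → ℝ)
    (ψ : EuclideanSpace ℝ (Fin n) → ℝ → ℝ) (f : EuclideanSpace ℝ (Fin n) → ℝ) : ℝ≥0∞ :=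
  ⨆ (a : EuclideanSpace ℝ (Fin n)) (r : Set.Ioi (0 : ℝ)),
    (ENNReal.ofReal (ψ a r.1))⁻¹ * wSet w (ball a r.1) ^ (-(1 / p)) * wLp p w f (ball a r.1)

/-- The generalized weighted Morrey norm for an `ℝ≥0∞`-valued function. -/
def morreyNormE {n : ℕ} (p : ℝ) (w : EuclideanSpace ℝ (Fin n) → ℝ)
    (ψ : EuclideanSpace ℝ (Fin n) → ℝ → ℝ) (g : EuclideanSpace ℝ (Fin n) → ℝ≥0∞) : ℝ≥0∞ :=
  ⨆ (a : EuclideanSpace ℝ (Fin n)) (r : Set.Ioi (0 : ℝ)),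
    (ENNReal.ofReal (ψ a r.1))⁻¹ * wSet w (ball a r.1) ^ (-(1 / p)) * wLpE p w g (ball a r.1)

/-- The generalized weighted weak Morrey norm `‖f‖_{WM^{p,w}_ψ}`. -/
def morreyWeakNorm {n : ℕ} (p : ℝ) (w : EuclideanSpace ℝ (Fin n) → ℝ)
    (ψ : EuclideanSpace ℝ (Fin n) → ℝ → ℝ) (f : EuclideanSpace ℝ (Fin n) → ℝ) : ℝ≥0∞ :=
  ⨆ (a : EuclideanSpace ℝ (Fin n)) (r : Set.Ioi (0 : ℝ)),
    (ENNReal.ofReal (ψ a r.1))⁻¹ * wSet w (ball a r.1) ^ (-(1 / p)) * wWeakLp p w f (ball a r.1)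

/-- The generalized weighted weak Morrey norm for an `ℝ≥0∞`-valued function. -/
def morreyWeakNormE {n : ℕ} (p : ℝ) (w : EuclideanSpace ℝ (Fin n) → ℝ)
    (ψ : EuclideanSpace ℝ (Fin n) → ℝ → ℝ) (g : EuclideanSpace ℝ (Fin n) → ℝ≥0∞) : ℝ≥0∞ :=
  ⨆ (a : EuclideanSpace ℝ (Fin n)) (r : Set.Ioi (0 : ℝ)),
    (ENNReal.ofReal (ψ a r.1))⁻¹ * wSet w (ball a r.1) ^ (-(1 / p)) * wWeakLpE p w g (ball a r.1)

end

lemma layer_real {β d : ℝ} (hβ : 0 < β) (hd : 0 < d) :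
    (ENNReal.ofReal (d ^ β))⁻¹ =
      ENNReal.ofReal β * ∫⁻ s in Ioi d, ENNReal.ofReal (s ^ (-β - 1)) := by
  have h1 := integral_Ioi_rpow_of_lt (a := -β - 1) (by linarith) hd
  have h2 := integrableOn_Ioi_rpow_of_lt (a := -β - 1) (by linarith) hd
  rw [← ofReal_integral_eq_lintegral_ofReal h2, h1, ← ENNReal.ofReal_mul hβ.le,
    ← ENNReal.ofReal_inv_of_pos (Real.rpow_pos_of_pos hd _)]
  · congr 1
    rw [show -β - 1 + 1 = -β by ring, Real.rpow_neg hd.le]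
    field_simp
  · filter_upwards [ae_restrict_mem measurableSet_Ioi] with s hs
    exact Real.rpow_nonneg (hd.le.trans (le_of_lt hs)) _

lemma tail_real {β d : ℝ} (hβ : 0 < β) (hd : 0 < d) :
    ∫⁻ s in Ioi d, ENNReal.ofReal (s ^ (-β - 1)) = ENNReal.ofReal (d ^ (-β) / β) := by
  have h1 := integral_Ioi_rpow_of_lt (a := -β - 1) (by linarith) hd
  have h2 := integrableOn_Ioi_rpow_of_lt (a := -β - 1) (by linarith) hd
  rw [← ofReal_integral_eq_lintegral_ofReal h2, h1]
  · congr 1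
    rw [show -β - 1 + 1 = -β by ring]
    field_simp
  · filter_upwards [ae_restrict_mem measurableSet_Ioi] with s hs
    exact Real.rpow_nonneg (hd.le.trans (le_of_lt hs)) _

lemma head_real {α R : ℝ} (hα : 0 < α) (hR : 0 < R) :
    ∫⁻ s in Ioc 0 R, ENNReal.ofReal (s ^ (α - 1)) = ENNReal.ofReal (R ^ α / α) := by
  have h1 := integral_rpow (a := 0) (b := R) (r := α - 1) (Or.inl (by linarith))
  have h2 := intervalIntegral.intervalIntegrable_rpow' (a := 0) (b := R) (r := α - 1) (by linarith)
  rw [intervalIntegrable_iff_integrableOn_Ioc_of_le hR.le] at h2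
  rw [intervalIntegral.integral_of_le hR.le] at h1
  rw [← ofReal_integral_eq_lintegral_ofReal h2, h1]
  · congr 1
    rw [show α - 1 + 1 = α by ring, Real.zero_rpow hα.ne', sub_zero]
  · filter_upwards [ae_restrict_mem measurableSet_Ioc] with s hs
    exact Real.rpow_nonneg hs.1.le _

lemma tonelli_layer {n : ℕ} {β : ℝ} (hβ : 0 < β)
    (μ : Measure (EuclideanSpace ℝ (Fin n))) [SFinite μ]
    (g : EuclideanSpace ℝ (Fin n) → ℝ≥0∞) (hg : Measurable g)
    (y : EuclideanSpace ℝ (Fin n)) (hy : ∀ᵐ x ∂μ, x ≠ y) :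
    ∫⁻ x, g x * (ENNReal.ofReal (dist x y ^ β))⁻¹ ∂μ =
      ENNReal.ofReal β * ∫⁻ s in Ioi (0 : ℝ),
        ENNReal.ofReal (s ^ (-β - 1)) * ∫⁻ x in ball y s, g x ∂μ := by
  have h1 : ∀ᵐ x ∂μ, g x * (ENNReal.ofReal (dist x y ^ β))⁻¹ =
      ENNReal.ofReal β * ∫⁻ s in Ioi (0 : ℝ),
        (if dist x y < s then g x * ENNReal.ofReal (s ^ (-β - 1)) else 0) := by
    filter_upwards [hy] with x hx
    have hd : 0 < dist x y := dist_pos.2 hx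
    rw [layer_real hβ hd, mul_left_comm]
    congr 1
    rw [← lintegral_const_mul _ (by fun_prop)]
    rw [← lintegral_indicator measurableSet_Ioi, ← lintegral_indicator measurableSet_Ioi]
    congr 1
    ext s
    by_cases h : dist x y < s
    · have : 0 < s := hd.trans h
      simp [h, this]
    · simp [h, Set.indicator]
  rw [lintegral_congr_ae h1, lintegral_const_mul' _ _ ENNReal.ofReal_ne_top]
  congr 1
  have hset : MeasurableSet {p : EuclideanSpace ℝ (Fin n) × ℝ | dist p.1 y < p.2} :=
    measurableSet_lt (by fun_prop) (by fun_prop)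
  rw [lintegral_lintegral_swap]
  · congr 1
    ext s
    rw [← lintegral_const_mul _ hg, ← lintegral_indicator measurableSet_ball]
    congr 1
    ext x
    simp only [Set.indicator, mem_ball]
    split_ifs <;> simp [mul_comm]
  · apply Measurable.aemeasurable
    refine Measurable.ite hset ?_ measurable_const
    fun_prop

lemma vol_ball' {n : ℕ} (a : EuclideanSpace ℝ (Fin n)) {r : ℝ} (hr : 0 < r) :
    volume (ball a r) = ENNReal.ofReal (r ^ (n : ℝ)) *
      volume (ball (0 : EuclideanSpace ℝ (Fin n)) 1) := by
  rw [Measure.addHaar_ball_of_pos _ _ hr, finrank_euclideanSpace_fin, Real.rpow_natCast]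

/-- Consequence of `A_{1,q}` on a single ball. -/
lemma ball_bound {n : ℕ} {q : ℝ} (hq : 0 < q) (w : EuclideanSpace ℝ (Fin n) → ℝ)
    (hw : IsWeight w) (hA : MuckA1q q w) :
    ∃ K : ℝ≥0∞, K ≠ ⊤ ∧ ∀ (a : EuclideanSpace ℝ (Fin n)) (r : ℝ), 0 < r →
      ∀ᵐ y, y ∈ ball a r →
        (∫⁻ x in ball a r, ENNReal.ofReal (w x ^ q)) ≤
          K * ENNReal.ofReal (r ^ (n : ℝ)) * ENNReal.ofReal (w y ^ q) := by
  obtain ⟨C, hC, h⟩ := hA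
  refine ⟨volume (ball (0 : EuclideanSpace ℝ (Fin n)) 1) * ENNReal.ofReal C ^ q, ?_, ?_⟩
  · exact ENNReal.mul_ne_top measure_ball_lt_top.ne
      (ENNReal.rpow_ne_top_of_nonneg hq.le ENNReal.ofReal_ne_top)
  intro a r hr
  have h1 := h a r hr
  rw [← ae_restrict_iff' measurableSet_ball]
  filter_upwards [ENNReal.ae_le_essSup (μ := volume.restrict (ball a r))
    (fun x => ENNReal.ofReal (w x)⁻¹), ae_restrict_of_ae hw.2.2.2] with y hy hpos
  set I := ∫⁻ x in ball a r, ENNReal.ofReal (w x ^ q)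
  have hV0 : volume (ball a r) ≠ 0 := (measure_ball_pos _ _ hr).ne'
  have hVt : volume (ball a r) ≠ ⊤ := measure_ball_lt_top.ne
  have h2 : ((volume (ball a r))⁻¹ * I) ^ (1 / q) * ENNReal.ofReal (w y)⁻¹ ≤ ENNReal.ofReal C :=
    le_trans (by gcongr) h1
  have hu0 : ENNReal.ofReal (w y) ≠ 0 := by simpa using hpos
  rw [ENNReal.ofReal_inv_of_pos hpos, ← div_eq_mul_inv,
    ENNReal.div_le_iff hu0 ENNReal.ofReal_ne_top] at h2
  have h3 := ENNReal.rpow_le_rpow h2 hq.le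
  rw [← ENNReal.rpow_mul, one_div_mul_cancel hq.ne', ENNReal.rpow_one, mul_comm,
    ← div_eq_mul_inv, ENNReal.div_le_iff hV0 hVt, ENNReal.mul_rpow_of_nonneg _ _ hq.le,
    ENNReal.ofReal_rpow_of_pos hpos, vol_ball' a hr] at h3
  refine h3.trans (le_of_eq ?_)
  ring

/-- Pointwise form: `M(w^q) ≤ K w^q` almost everywhere. -/
lemma pointwise_bound {n : ℕ} {q : ℝ} (w : EuclideanSpace ℝ (Fin n) → ℝ) (K : ℝ≥0∞)
    (h : ∀ (a : EuclideanSpace ℝ (Fin n)) (r : ℝ), 0 < r →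
      ∀ᵐ y, y ∈ ball a r →
        (∫⁻ x in ball a r, ENNReal.ofReal (w x ^ q)) ≤
          K * ENNReal.ofReal (r ^ (n : ℝ)) * ENNReal.ofReal (w y ^ q)) :
    ∀ᵐ y, ∀ s : ℝ, 0 < s → (∫⁻ x in ball y s, ENNReal.ofReal (w x ^ q)) ≤
      K * ENNReal.ofReal (3 ^ (n : ℝ)) * ENNReal.ofReal (s ^ (n : ℝ)) *
        ENNReal.ofReal (w y ^ q) := by
  obtain ⟨D, hDc, hDd⟩ := TopologicalSpace.exists_countable_dense (EuclideanSpace ℝ (Fin n))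
  have h1 : ∀ᵐ y, ∀ c ∈ D, ∀ t : ℚ, 0 < (t : ℝ) → y ∈ ball c (t : ℝ) →
      (∫⁻ x in ball c (t : ℝ), ENNReal.ofReal (w x ^ q)) ≤
          K * ENNReal.ofReal ((t : ℝ) ^ (n : ℝ)) * ENNReal.ofReal (w y ^ q) := by
    rw [ae_ball_iff hDc]
    intro c _
    rw [ae_all_iff]
    intro t
    by_cases ht : 0 < (t : ℝ)
    · filter_upwards [h c t ht] with y hy _ using hy
    · exact Filter.Eventually.of_forall fun y hy => absurd hy ht
  filter_upwards [h1] with y hy s hs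
  obtain ⟨c, hcD, hc⟩ := hDd.exists_dist_lt y hs
  obtain ⟨t, ht1, ht2⟩ := exists_rat_btwn (show 2 * s < 3 * s by linarith)
  have ht0 : (0 : ℝ) < t := by linarith
  have h2 := hy c hcD t ht0 (by rw [mem_ball]; linarith)
  calc _ ≤ ∫⁻ x in ball c (t : ℝ), ENNReal.ofReal (w x ^ q) :=
        lintegral_mono_set (ball_subset_ball' (by linarith))
    _ ≤ _ := h2
    _ ≤ K * ENNReal.ofReal ((3 * s) ^ (n : ℝ)) * ENNReal.ofReal (w y ^ q) := by gcongr
    _ = _ := by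
      rw [Real.mul_rpow (by norm_num) hs.le, ENNReal.ofReal_mul (by positivity)]
      ring

lemma kernel_bound {n : ℕ} {α q : ℝ} (hα : 0 < α) (hαn : α < n) (hq0 : 0 < q)
    (hq : 1 / q = 1 - α / n) (μ : Measure (EuclideanSpace ℝ (Fin n))) [SFinite μ]
    (K : ℝ≥0∞) (y : EuclideanSpace ℝ (Fin n)) (hy : ∀ᵐ x ∂μ, x ≠ y)
    (U : ℝ) (hU : 0 < U)
    (hK : ∀ s : ℝ, 0 < s → μ (ball y s) ≤ K * ENNReal.ofReal (s ^ (n : ℝ)) *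
      ENNReal.ofReal (U ^ q))
    (S : Set (EuclideanSpace ℝ (Fin n))) (M : ℝ) (hM : 0 < M) (hS : μ S = ENNReal.ofReal M) :
    ∫⁻ x in S, (ENNReal.ofReal (dist x y ^ ((n : ℝ) - α)))⁻¹ ∂μ ≤
      ENNReal.ofReal (n - α) * (K * ENNReal.ofReal α⁻¹ + ENNReal.ofReal (n - α)⁻¹) *
        (ENNReal.ofReal U * ENNReal.ofReal (M ^ (1 - 1 / q))) := by
  have hn : (0 : ℝ) < n := hα.trans hαn
  have hβ : 0 < (n : ℝ) - α := sub_pos.2 hαn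
  have h1 := tonelli_layer hβ (μ.restrict S) (fun _ => 1) measurable_const y
    (ae_restrict_of_ae hy)
  simp only [one_mul, lintegral_one, Measure.restrict_apply MeasurableSet.univ, univ_inter] at h1
  rw [h1, mul_assoc]
  gcongr
  set R : ℝ := (M / U ^ q) ^ (1 / (n : ℝ)) with hR
  have hUq : 0 < U ^ q := Real.rpow_pos_of_pos hU q
  have hR0 : 0 < R := Real.rpow_pos_of_pos (by positivity) _
  have hq2 : q * (1 - α / n) = 1 := by rw [← hq]; field_simp
  have e1 : U ^ q * R ^ α = U * M ^ (1 - 1 / q) := by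
    rw [hR, ← Real.rpow_mul (by positivity), Real.div_rpow hM.le hUq.le, ← Real.rpow_mul hU.le,
      hq, mul_div_assoc', mul_comm (U ^ q), mul_div_assoc, ← Real.rpow_sub hU]
    rw [show q - q * (1 / n * α) = 1 by linear_combination hq2, Real.rpow_one, mul_comm]
    congr 2; ring
  have e2 : M * R ^ (-((n : ℝ) - α)) = U * M ^ (1 - 1 / q) := by
    rw [← e1, neg_sub, Real.rpow_sub hR0]
    have : R ^ (n : ℝ) = M / U ^ q := by
      rw [hR, ← Real.rpow_mul (by positivity), one_div_mul_cancel hn.ne', Real.rpow_one]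
    rw [this]
    field_simp
  rw [← Ioc_union_Ioi_eq_Ioi hR0.le]
  refine (lintegral_union_le _ _ _).trans ?_
  rw [add_mul]
  gcongr ?_ + ?_
  · calc _ ≤ ∫⁻ s in Ioc 0 R, K * ENNReal.ofReal (U ^ q) * ENNReal.ofReal (s ^ (α - 1)) := by
          refine setLIntegral_mono' measurableSet_Ioc fun s hs => ?_
          calc _ ≤ ENNReal.ofReal (s ^ (-((n : ℝ) - α) - 1)) * (K * ENNReal.ofReal (s ^ (n : ℝ)) *
                ENNReal.ofReal (U ^ q)) := by
                gcongr
                exact (Measure.restrict_apply_le _ _).trans (hK s hs.1)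
            _ = K * ENNReal.ofReal (U ^ q) * (ENNReal.ofReal (s ^ (-((n : ℝ) - α) - 1)) *
                  ENNReal.ofReal (s ^ (n : ℝ))) := by ring
            _ = _ := by
                rw [← ENNReal.ofReal_mul (Real.rpow_nonneg hs.1.le _), ← Real.rpow_add hs.1]
                congr 3; ring
      _ = K * ENNReal.ofReal (U ^ q) * ENNReal.ofReal (R ^ α / α) := by
          rw [lintegral_const_mul _ (by fun_prop), head_real hα hR0]
      _ = _ := by
          rw [mul_assoc, ← ENNReal.ofReal_mul hUq.le, mul_div_assoc', e1, mul_assoc,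
            ← ENNReal.ofReal_mul hU.le, ← ENNReal.ofReal_mul (inv_nonneg.2 hα.le)]
          congr 2; field_simp
  · calc _ ≤ ∫⁻ s in Ioi R, ENNReal.ofReal M * ENNReal.ofReal (s ^ (-((n : ℝ) - α) - 1)) := by
          refine setLIntegral_mono' measurableSet_Ioi fun s hs => ?_
          rw [mul_comm]
          gcongr
          rw [← hS]
          exact (measure_mono (subset_univ _)).trans (by simp)
      _ = ENNReal.ofReal M * ENNReal.ofReal (R ^ (-((n : ℝ) - α)) / (n - α)) := by
          rw [lintegral_const_mul _ (by fun_prop), tail_real hβ hR0]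
      _ = _ := by
          rw [← ENNReal.ofReal_mul hM.le, mul_div_assoc', e2,
            ← ENNReal.ofReal_mul hU.le, ← ENNReal.ofReal_mul (inv_nonneg.2 hβ.le)]
          congr 2; field_simp

lemma far_bound {n : ℕ} {α q : ℝ} (hα : 0 < α) (hαn : α < n) (hq0 : 0 < q)
    (hq : 1 / q = 1 - α / n) (w : EuclideanSpace ℝ (Fin n) → ℝ) (hw : IsWeight w)
    (K : ℝ≥0∞) (hKt : K ≠ ⊤)
    (μ : Measure (EuclideanSpace ℝ (Fin n)))
    (hμt : ∀ (a : EuclideanSpace ℝ (Fin n)) (r : ℝ), μ (ball a r) ≠ ⊤)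
    (hμ0 : ∀ (a : EuclideanSpace ℝ (Fin n)) (r : ℝ), 0 < r → μ (ball a r) ≠ 0)
    (h : ∀ (a : EuclideanSpace ℝ (Fin n)) (r : ℝ), 0 < r →
      ∀ᵐ y, y ∈ ball a r →
        μ (ball a r) ≤ K * ENNReal.ofReal (r ^ (n : ℝ)) * ENNReal.ofReal (w y ^ q))
    (f : EuclideanSpace ℝ (Fin n) → ℝ) (hf : Measurable f)
    (a x : EuclideanSpace ℝ (Fin n)) (r : ℝ) (hr : 0 < r) (hx : x ∈ ball a r) :
    ∫⁻ y in (ball a (2 * r))ᶜ,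
        ENNReal.ofReal |f y| * (ENNReal.ofReal (dist x y ^ ((n : ℝ) - α)))⁻¹ ≤
      ENNReal.ofReal (2 ^ ((n : ℝ) - α)) * (ENNReal.ofReal (n - α) * (K ^ (1 / q) *
        ∫⁻ s in Ioi r, μ (ball a s) ^ (-(1 / q)) *
          (∫⁻ y in ball a s, ENNReal.ofReal |f y| * ENNReal.ofReal (w y)) *
            ENNReal.ofReal s⁻¹)) := by
  have hn : (0 : ℝ) < n := hα.trans hαn
  have hβ : 0 < (n : ℝ) - α := sub_pos.2 hαn
  have hβq : (n : ℝ) * (1 / q) = n - α := by rw [hq]; field_simp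
  have hfm : Measurable fun y => ENNReal.ofReal |f y| := by fun_prop
  calc _ ≤ ∫⁻ y in (ball a (2 * r))ᶜ, ENNReal.ofReal (2 ^ ((n : ℝ) - α)) *
        (ENNReal.ofReal |f y| * (ENNReal.ofReal (dist y a ^ ((n : ℝ) - α)))⁻¹) := by
        refine setLIntegral_mono' measurableSet_ball.compl fun y hy => ?_
        have hy' : 2 * r ≤ dist y a := by simpa using hy
        have hx' : dist x a < r := hx
        have hd : dist y a ≤ 2 * dist x y := by
          have := dist_triangle y x a
          rw [dist_comm y x] at this
          linarith
        have hd0 : 0 < dist y a := by linarith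
        have hd1 : 0 < dist x y := by linarith
        rw [mul_left_comm]
        gcongr
        rw [← ENNReal.ofReal_inv_of_pos (by positivity), ← ENNReal.ofReal_inv_of_pos (by positivity),
          ← ENNReal.ofReal_mul (by positivity)]
        apply ENNReal.ofReal_le_ofReal
        rw [← div_eq_mul_inv, inv_eq_one_div, div_le_div_iff₀ (by positivity) (by positivity),
          one_mul, ← Real.mul_rpow (by norm_num) hd1.le]
        gcongr
    _ = ENNReal.ofReal (2 ^ ((n : ℝ) - α)) * (ENNReal.ofReal (n - α) *
        ∫⁻ s in Ioi (0 : ℝ), ENNReal.ofReal (s ^ (-((n : ℝ) - α) - 1)) *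
          ∫⁻ y in ball a s, ENNReal.ofReal |f y| ∂(volume.restrict (ball a (2 * r))ᶜ)) := by
        rw [lintegral_const_mul' _ _ ENNReal.ofReal_ne_top, tonelli_layer hβ _ _ hfm]
        filter_upwards [ae_restrict_mem measurableSet_ball.compl] with y hy
        rintro rfl
        exact hy (mem_ball_self (by linarith))
    _ ≤ _ := by
        gcongr
        rw [← lintegral_const_mul' _ _ (ENNReal.rpow_ne_top_of_nonneg (by positivity) hKt),
          ← lintegral_indicator measurableSet_Ioi, ← lintegral_indicator measurableSet_Ioi]
        refine lintegral_mono fun s => ?_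
        by_cases hs0 : 0 < s
        swap
        · simp [hs0]
        by_cases hs : r < s
        swap
        · have : (volume.restrict (ball a (2 * r))ᶜ).restrict (ball a s) = 0 := by
            rw [Measure.restrict_restrict measurableSet_ball, Measure.restrict_eq_zero]
            have hdis : Disjoint (ball a s) (ball a (2 * r))ᶜ :=
              disjoint_compl_right_iff_subset.2 (ball_subset_ball (by linarith))
            rw [hdis.inter_eq, measure_empty]
          simp only [Set.indicator, mem_Ioi, hs0, if_true, this, lintegral_zero_measure, mul_zero]
          exact zero_le
        simp only [Set.indicator, mem_Ioi, hs0, hs, if_true]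
        have hm : μ (ball a s) ^ (1 / q) * ∫⁻ y in ball a s, ENNReal.ofReal |f y| ≤
            K ^ (1 / q) * ENNReal.ofReal (s ^ ((n : ℝ) - α)) *
              ∫⁻ y in ball a s, ENNReal.ofReal |f y| * ENNReal.ofReal (w y) := by
          rw [← lintegral_const_mul _ hfm, ← lintegral_const_mul' _ _ (ENNReal.mul_ne_top
            (ENNReal.rpow_ne_top_of_nonneg (by positivity) hKt) ENNReal.ofReal_ne_top)]
          apply lintegral_mono_ae
          rw [ae_restrict_iff' measurableSet_ball]
          filter_upwards [h a s hs0] with y hy hys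
          have h2 := ENNReal.rpow_le_rpow (hy hys) (show 0 ≤ 1 / q by positivity)
          rw [ENNReal.mul_rpow_of_nonneg _ _ (by positivity),
            ENNReal.mul_rpow_of_nonneg _ _ (by positivity),
            ENNReal.ofReal_rpow_of_nonneg (by positivity) (by positivity),
            ENNReal.ofReal_rpow_of_nonneg (Real.rpow_nonneg (hw.2.1 y) _) (by positivity),
            ← Real.rpow_mul hs0.le, ← Real.rpow_mul (hw.2.1 y), hβq,
            mul_one_div_cancel hq0.ne', Real.rpow_one] at h2
          calc _ ≤ _ := mul_le_mul_left h2 _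
            _ = _ := by ring
        have hP0 : μ (ball a s) ^ (1 / q) ≠ 0 := by
          simp [ENNReal.rpow_eq_zero_iff, hμ0 a s hs0, hμt a s]
        have hPt : μ (ball a s) ^ (1 / q) ≠ ⊤ :=
          ENNReal.rpow_ne_top_of_nonneg (by positivity) (hμt a s)
        have hm2 : ∫⁻ y in ball a s, ENNReal.ofReal |f y| ≤ μ (ball a s) ^ (-(1 / q)) *
            (K ^ (1 / q) * ENNReal.ofReal (s ^ ((n : ℝ) - α)) *
              ∫⁻ y in ball a s, ENNReal.ofReal |f y| * ENNReal.ofReal (w y)) := by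
          rw [ENNReal.rpow_neg, mul_comm _ (_ * _), ← div_eq_mul_inv,
            ENNReal.le_div_iff_mul_le (Or.inl hP0) (Or.inl hPt), mul_comm]
          exact hm
        calc _ ≤ ENNReal.ofReal (s ^ (-((n : ℝ) - α) - 1)) *
              ∫⁻ y in ball a s, ENNReal.ofReal |f y| := by
              gcongr
              exact Measure.restrict_le_self
          _ ≤ ENNReal.ofReal (s ^ (-((n : ℝ) - α) - 1)) * _ := mul_le_mul_right hm2 _
          _ = K ^ (1 / q) * (μ (ball a s) ^ (-(1 / q)) *
            (∫⁻ y in ball a s, ENNReal.ofReal |f y| * ENNReal.ofReal (w y)) *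
              (ENNReal.ofReal (s ^ (-((n : ℝ) - α) - 1)) * ENNReal.ofReal (s ^ ((n : ℝ) - α)))) := by
              ring
          _ = _ := by
              rw [← ENNReal.ofReal_mul (by positivity), ← Real.rpow_add hs0,
                show -((n : ℝ) - α) - 1 + (n - α) = -1 by ring, Real.rpow_neg_one]

lemma near_bound {n : ℕ} {q : ℝ} (hq0 : 0 < q)
    (μ : Measure (EuclideanSpace ℝ (Fin n)))
    (hμt : ∀ (a : EuclideanSpace ℝ (Fin n)) (r : ℝ), μ (ball a r) ≠ ⊤)
    (hμ0 : ∀ (a : EuclideanSpace ℝ (Fin n)) (r : ℝ), 0 < r → μ (ball a r) ≠ 0)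
    (D : ℝ≥0∞)
    (a : EuclideanSpace ℝ (Fin n)) (r : ℝ) (hr : 0 < r)
    (hD : μ (ball a (4 * r)) ≤ D * μ (ball a r))
    (F : ℝ → ℝ≥0∞) (hF : Monotone F) :
    F (2 * r) ≤ 2 * D ^ (1 / q) * μ (ball a r) ^ (1 / q) *
      ∫⁻ s in Ioi r, μ (ball a s) ^ (-(1 / q)) * F s * ENNReal.ofReal s⁻¹ := by
  have hq1 : 0 ≤ 1 / q := by positivity
  have h4 : 0 < 4 * r := by linarith
  set P := μ (ball a (4 * r)) with hP
  have hP0 : P ^ (1 / q) ≠ 0 := by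
    simp [ENNReal.rpow_eq_zero_iff, hP, hμ0 a _ h4, hμt a]
  have hPt : P ^ (1 / q) ≠ ⊤ := ENNReal.rpow_ne_top_of_nonneg hq1 (hμt a _)
  calc F (2 * r) = 2 * P ^ (1 / q) * (P ^ (-(1 / q)) * F (2 * r) * ENNReal.ofReal (4 * r)⁻¹ *
        ENNReal.ofReal (2 * r)) := by
        have e : ENNReal.ofReal (4 * r)⁻¹ * ENNReal.ofReal (2 * r) = 2⁻¹ := by
          rw [← ENNReal.ofReal_mul (by positivity),
            show (4 * r)⁻¹ * (2 * r) = (2 : ℝ)⁻¹ by field_simp; norm_num,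
            ENNReal.ofReal_inv_of_pos (by norm_num)]
          simp
        calc F (2 * r) = (2 * 2⁻¹) * (P ^ (1 / q) * (P ^ (1 / q))⁻¹) * F (2 * r) := by
              rw [ENNReal.mul_inv_cancel hP0 hPt, ENNReal.mul_inv_cancel (by simp) (by simp)]
              simp
          _ = _ := by rw [ENNReal.rpow_neg, ← e]; ring
    _ ≤ 2 * (D * μ (ball a r)) ^ (1 / q) *
        ∫⁻ s in Ioi r, μ (ball a s) ^ (-(1 / q)) * F s * ENNReal.ofReal s⁻¹ := by
        gcongr ?_ * ?_
        · gcongr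
        calc _ = ∫⁻ s in Ioc (2 * r) (4 * r),
              P ^ (-(1 / q)) * F (2 * r) * ENNReal.ofReal (4 * r)⁻¹ := by
              rw [setLIntegral_const, Real.volume_Ioc]; congr 2; ring
          _ ≤ ∫⁻ s in Ioc (2 * r) (4 * r),
              μ (ball a s) ^ (-(1 / q)) * F s * ENNReal.ofReal s⁻¹ := by
              refine setLIntegral_mono' measurableSet_Ioc fun s hs => ?_
              have hs0 : 0 < s := by linarith [hs.1]
              gcongr ?_ * ?_ * ?_
              · rw [ENNReal.rpow_neg, ENNReal.rpow_neg]
                rw [hP]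
                gcongr
                exact hs.2
              · exact hF hs.1.le
              · gcongr
                exact hs.2
          _ ≤ _ := lintegral_mono_set fun s hs => by
              have := hs.1
              simp only [mem_Ioi]; linarith
    _ = _ := by
        rw [ENNReal.mul_rpow_of_nonneg _ _ hq1]; ring

lemma doubling {n : ℕ} {q : ℝ} (w : EuclideanSpace ℝ (Fin n) → ℝ)
    (K : ℝ≥0∞) (hKt : K ≠ ⊤)
    (h : ∀ (a : EuclideanSpace ℝ (Fin n)) (r : ℝ), 0 < r →
      ∀ᵐ y, y ∈ ball a r →
        (∫⁻ x in ball a r, ENNReal.ofReal (w x ^ q)) ≤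
          K * ENNReal.ofReal (r ^ (n : ℝ)) * ENNReal.ofReal (w y ^ q))
    (a : EuclideanSpace ℝ (Fin n)) (r : ℝ) (hr : 0 < r) :
    (∫⁻ x in ball a (4 * r), ENNReal.ofReal (w x ^ q)) ≤
      (K * ENNReal.ofReal (4 ^ (n : ℝ)) * (volume (ball (0 : EuclideanSpace ℝ (Fin n)) 1))⁻¹) *
        ∫⁻ x in ball a r, ENNReal.ofReal (w x ^ q) := by
  set I := ∫⁻ x in ball a (4 * r), ENNReal.ofReal (w x ^ q)
  set v := volume (ball (0 : EuclideanSpace ℝ (Fin n)) 1) with hv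
  have hv0 : v ≠ 0 := (measure_ball_pos _ _ one_pos).ne'
  have hvt : v ≠ ⊤ := measure_ball_lt_top.ne
  have hrn : 0 < r ^ (n : ℝ) := by positivity
  have h1 : I * volume (ball a r) ≤ K * ENNReal.ofReal ((4 * r) ^ (n : ℝ)) *
      ∫⁻ x in ball a r, ENNReal.ofReal (w x ^ q) := by
    rw [← setLIntegral_const, ← lintegral_const_mul' _ _
      (ENNReal.mul_ne_top hKt ENNReal.ofReal_ne_top)]
    apply lintegral_mono_ae
    rw [ae_restrict_iff' measurableSet_ball]
    filter_upwards [h a (4 * r) (by linarith)] with y hy hys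
    exact hy (ball_subset_ball (by linarith) hys)
  rw [vol_ball' a hr, ← ENNReal.le_div_iff_mul_le] at h1
  · refine h1.trans (le_of_eq ?_)
    rw [Real.mul_rpow (by norm_num) hr.le, ENNReal.ofReal_mul (by positivity), div_eq_mul_inv,
      ENNReal.mul_inv (Or.inr hvt) (Or.inr hv0)]
    set ρ := ENNReal.ofReal (r ^ (n : ℝ))
    have hρ : ρ * ρ⁻¹ = 1 := ENNReal.mul_inv_cancel (by simpa [ρ] using hrn) ENNReal.ofReal_ne_top
    calc _ = K * ENNReal.ofReal (4 ^ (n : ℝ)) * v⁻¹ *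
        (∫⁻ x in ball a r, ENNReal.ofReal (w x ^ q)) * (ρ * ρ⁻¹) := by ring
      _ = _ := by rw [hρ, mul_one]
  · left; exact mul_ne_zero (by simpa using hrn) hv0
  · left; exact ENNReal.mul_ne_top ENNReal.ofReal_ne_top hvt

/-- Let `0 < α < n`, `1/q = 1 − α/n`, `w ∈ A_{1,q}`. Then there is
`C > 0`, independent of `f`, `a`, `r`, such that for every `a ∈ ℝⁿ`, `r > 0` and
`f ∈ L^{1,w}_loc`:
`‖I_α f‖_{WL^{q,w^q}(B(a,r))} ≤ C·w^q(B(a,r))^{1/q}·∫_r^∞ w^q(B(a,s))^{-1/q}‖f‖_{L^{1,w}(B(a,s))} ds/s`. -/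
theorem statement13 {n : ℕ} (α q : ℝ) (hα : 0 < α) (hαn : α < n)
    (hq : 1 / q = 1 - α / n)
    (w : EuclideanSpace ℝ (Fin n) → ℝ) (hw : IsWeight w) (hA1q : MuckA1q q w) :
    ∃ C : ℝ, 0 < C ∧
      ∀ (a : EuclideanSpace ℝ (Fin n)) (r : ℝ) (f : EuclideanSpace ℝ (Fin n) → ℝ),
        0 < r → MemLocWLp 1 w f →
        wWeakLpE q (fun x => w x ^ q) (fracIntE α f) (ball a r) ≤
          ENNReal.ofReal C * wSet (fun x => w x ^ q) (ball a r) ^ (1 / q) *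
            ∫⁻ s in Set.Ioi r,
              wSet (fun x => w x ^ q) (ball a s) ^ (-(1 / q)) *
                wLp 1 w f (ball a s) * ENNReal.ofReal s⁻¹ := by
  have hn : (0 : ℝ) < n := hα.trans hαn
  have hβ : 0 < (n : ℝ) - α := sub_pos.2 hαn
  have hq1 : 0 < 1 / q := by
    rw [hq, sub_pos, div_lt_one hn]; exact hαn
  have hq0 : 0 < q := one_div_pos.1 hq1
  have hq1' : 1 / q ≤ 1 := by
    rw [hq]; have : 0 < α / n := by positivity
    linarith
  have : Nontrivial (EuclideanSpace ℝ (Fin n)) := by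
    have : Nonempty (Fin n) := ⟨⟨0, by exact_mod_cast hn⟩⟩
    infer_instance
  obtain ⟨K, hKt, hK⟩ := ball_bound hq0 w hw hA1q
  have hwm : Measurable w := hw.1
  have hWm : Measurable fun x => ENNReal.ofReal (w x ^ q) := by fun_prop
  set μ : Measure (EuclideanSpace ℝ (Fin n)) :=
    volume.withDensity (fun x => ENNReal.ofReal (w x ^ q)) with hμ
  have hμS : ∀ S, MeasurableSet S → (∫⁻ x in S, ENNReal.ofReal (w x ^ q)) = μ S :=
    fun S hS => (withDensity_apply _ hS).symm
  have hK' := hK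
  have hpt := pointwise_bound w K hK
  have hdb := doubling w K hKt hK
  simp only [hμS _ measurableSet_ball] at hK' hpt hdb
  have hμac : μ ≪ volume := withDensity_absolutelyContinuous _ _
  have hμt : ∀ (a : EuclideanSpace ℝ (Fin n)) (r : ℝ), μ (ball a r) ≠ ⊤ := by
    intro a r
    rcases le_or_gt r 0 with h0 | h0
    · simp [ball_eq_empty.2 h0]
    have : (ae (volume.restrict (ball a r))).NeBot := by
      rw [ae_neBot, Ne, Measure.restrict_eq_zero]
      exact (measure_ball_pos _ _ h0).ne'
    have h1 := hK' a r h0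
    rw [← ae_restrict_iff' measurableSet_ball] at h1
    obtain ⟨y, hy⟩ := h1.exists
    exact ne_top_of_le_ne_top (ENNReal.mul_ne_top (ENNReal.mul_ne_top hKt ENNReal.ofReal_ne_top)
      ENNReal.ofReal_ne_top) hy
  have hμ0 : ∀ (a : EuclideanSpace ℝ (Fin n)) (r : ℝ), 0 < r → μ (ball a r) ≠ 0 := by
    intro a r h0 h
    rw [← hμS _ measurableSet_ball, lintegral_eq_zero_iff hWm] at h
    have : (ae (volume.restrict (ball a r))).NeBot := by
      rw [ae_neBot, Ne, Measure.restrict_eq_zero]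
      exact (measure_ball_pos _ _ h0).ne'
    obtain ⟨y, hy, hy2⟩ := (h.and (ae_restrict_of_ae hw.2.2.2)).exists
    have : 0 < w y ^ q := Real.rpow_pos_of_pos hy2 q
    simp at hy
    linarith
  set v := volume (ball (0 : EuclideanSpace ℝ (Fin n)) 1) with hv
  have hv0 : v ≠ 0 := (measure_ball_pos _ _ one_pos).ne'
  set D : ℝ≥0∞ := K * ENNReal.ofReal (4 ^ (n : ℝ)) * v⁻¹ with hD
  have hDt : D ≠ ⊤ := ENNReal.mul_ne_top (ENNReal.mul_ne_top hKt ENNReal.ofReal_ne_top)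
    (ENNReal.inv_ne_top.2 hv0)
  set K4 : ℝ≥0∞ := ENNReal.ofReal (n - α) * (K * ENNReal.ofReal (3 ^ (n : ℝ)) *
    ENNReal.ofReal α⁻¹ + ENNReal.ofReal (n - α)⁻¹) with hK4
  have hK4t : K4 ≠ ⊤ := ENNReal.mul_ne_top ENNReal.ofReal_ne_top (ENNReal.add_ne_top.2
    ⟨ENNReal.mul_ne_top (ENNReal.mul_ne_top hKt ENNReal.ofReal_ne_top) ENNReal.ofReal_ne_top,
      ENNReal.ofReal_ne_top⟩)
  set K5 : ℝ≥0∞ := ENNReal.ofReal (2 ^ ((n : ℝ) - α)) * (ENNReal.ofReal (n - α) * K ^ (1 / q))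
    with hK5
  have hK5t : K5 ≠ ⊤ := ENNReal.mul_ne_top ENNReal.ofReal_ne_top (ENNReal.mul_ne_top
    ENNReal.ofReal_ne_top (ENNReal.rpow_ne_top_of_nonneg hq1.le hKt))
  set C : ℝ≥0∞ := K4 * (2 * D ^ (1 / q)) + K5 with hC
  have hCt : C ≠ ⊤ := ENNReal.add_ne_top.2 ⟨ENNReal.mul_ne_top hK4t (ENNReal.mul_ne_top (by simp)
    (ENNReal.rpow_ne_top_of_nonneg hq1.le hDt)), hK5t⟩
  refine ⟨C.toReal + 1, by positivity, ?_⟩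
  intro a r f hr hf
  have hCle : C ≤ ENNReal.ofReal (C.toReal + 1) := by
    rw [← ENNReal.ofReal_toReal hCt]
    apply ENNReal.ofReal_le_ofReal
    rw [ENNReal.toReal_ofReal ENNReal.toReal_nonneg]
    linarith
  have hfm : Measurable f := hf.1
  simp only [wSet, hμS _ measurableSet_ball, wLp, wWeakLpE, ENNReal.rpow_one, div_one]
  set F : ℝ → ℝ≥0∞ := fun s => ∫⁻ y in ball a s, ENNReal.ofReal |f y| * ENNReal.ofReal (w y)
    with hF
  have hFm : Monotone F := fun s t hst => lintegral_mono_set (ball_subset_ball hst)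
  set J := ∫⁻ s in Ioi r, μ (ball a s) ^ (-(1 / q)) * F s * ENNReal.ofReal s⁻¹ with hJ
  have hnear : F (2 * r) ≤ 2 * D ^ (1 / q) * μ (ball a r) ^ (1 / q) * J :=
    near_bound hq0 μ hμt hμ0 D a r hr (hdb a r hr) F hFm
  have hfar : ∀ x ∈ ball a r, ∫⁻ y in (ball a (2 * r))ᶜ,
        ENNReal.ofReal |f y| * (ENNReal.ofReal (dist x y ^ ((n : ℝ) - α)))⁻¹ ≤ K5 * J := by
    intro x hx
    refine (far_bound hα hαn hq0 hq w hw K hKt μ hμt hμ0 hK' f hfm a x r hr hx).trans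
      (le_of_eq ?_)
    rw [hK5, hJ, mul_assoc, mul_assoc]
  have hkm : Measurable fun p : EuclideanSpace ℝ (Fin n) × EuclideanSpace ℝ (Fin n) =>
      ENNReal.ofReal |f p.2| * (ENNReal.ofReal (dist p.1 p.2 ^ ((n : ℝ) - α)))⁻¹ := by
    fun_prop
  have hIf : fracIntE α f = fun x => ∫⁻ y, ENNReal.ofReal |f y| *
      (ENNReal.ofReal (dist x y ^ ((n : ℝ) - α)))⁻¹ := by
    ext x; simp only [fracIntE, div_eq_mul_inv]
  have hIm : Measurable (fracIntE α f) := by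
    rw [hIf]; exact hkm.lintegral_prod_right'
  refine iSup_le ?_
  rintro ⟨γ, hγ⟩
  simp only
  set S := {x | x ∈ ball a r ∧ ENNReal.ofReal γ < fracIntE α f x} with hS
  have hSm : MeasurableSet S :=
    measurableSet_ball.inter (measurableSet_lt measurable_const hIm)
  rw [hμS S hSm]
  have hSB : S ⊆ ball a r := fun x hx => hx.1
  have hSt : μ S ≠ ⊤ := ne_top_of_le_ne_top (hμt a r) (measure_mono hSB)
  rcases eq_or_ne (μ S) 0 with hS0 | hS0
  · rw [hS0, ENNReal.zero_rpow_of_pos hq1, mul_zero]; exact zero_le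
  set M := (μ S).toReal with hMdef
  have hM : 0 < M := ENNReal.toReal_pos hS0 hSt
  have hMS : μ S = ENNReal.ofReal M := (ENNReal.ofReal_toReal hSt).symm
  have hker : ∀ᵐ y, ∫⁻ x in S, (ENNReal.ofReal (dist x y ^ ((n : ℝ) - α)))⁻¹ ∂μ ≤
      K4 * (ENNReal.ofReal (w y) * μ S ^ (1 - 1 / q)) := by
    filter_upwards [hpt, hw.2.2.2] with y hy hpos
    have hne : ∀ᵐ x ∂μ, x ≠ y := hμac.ae_le (Measure.ae_ne volume y)
    have := kernel_bound hα hαn hq0 hq μ (K * ENNReal.ofReal (3 ^ (n : ℝ))) y hne (w y) hpos hy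
      S M hM hMS
    rwa [← ENNReal.ofReal_rpow_of_pos hM, ← hMS] at this
  have hSpt : μ S ^ (1 - 1 / q) ≠ ⊤ := ENNReal.rpow_ne_top_of_nonneg (by linarith) hSt
  have hone : ∫⁻ x in S, ∫⁻ y in ball a (2 * r), ENNReal.ofReal |f y| *
      (ENNReal.ofReal (dist x y ^ ((n : ℝ) - α)))⁻¹ ∂volume ∂μ ≤
      K4 * F (2 * r) * μ S ^ (1 - 1 / q) := by
    rw [lintegral_lintegral_swap hkm.aemeasurable]
    calc _ ≤ ∫⁻ y in ball a (2 * r), (K4 * μ S ^ (1 - 1 / q)) *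
          (ENNReal.ofReal |f y| * ENNReal.ofReal (w y)) := by
          apply lintegral_mono_ae
          apply ae_restrict_of_ae
          filter_upwards [hker] with y hy
          rw [lintegral_const_mul' _ _ ENNReal.ofReal_ne_top]
          calc _ ≤ _ := mul_le_mul_right hy _
            _ = _ := by ring
      _ = _ := by
          rw [lintegral_const_mul' _ _ (ENNReal.mul_ne_top hK4t hSpt)]
          ring
  have htwo : ∫⁻ x in S, ∫⁻ y in (ball a (2 * r))ᶜ, ENNReal.ofReal |f y| *
      (ENNReal.ofReal (dist x y ^ ((n : ℝ) - α)))⁻¹ ∂volume ∂μ ≤ K5 * J * μ S := by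
    rw [← setLIntegral_const]
    exact setLIntegral_mono' hSm fun x hx => hfar x hx.1
  have hmain : ENNReal.ofReal γ * μ S ≤ K4 * F (2 * r) * μ S ^ (1 - 1 / q) + K5 * J * μ S := by
    calc _ = ∫⁻ _ in S, ENNReal.ofReal γ ∂μ := (setLIntegral_const _ _).symm
      _ ≤ ∫⁻ x in S, fracIntE α f x ∂μ := setLIntegral_mono' hSm fun x hx => hx.2.le
      _ = (∫⁻ x in S, ∫⁻ y in ball a (2 * r), ENNReal.ofReal |f y| *
            (ENNReal.ofReal (dist x y ^ ((n : ℝ) - α)))⁻¹ ∂volume ∂μ) +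
          ∫⁻ x in S, ∫⁻ y in (ball a (2 * r))ᶜ, ENNReal.ofReal |f y| *
            (ENNReal.ofReal (dist x y ^ ((n : ℝ) - α)))⁻¹ ∂volume ∂μ := by
          rw [← lintegral_add_left hkm.lintegral_prod_right']
          simp only [hIf, lintegral_add_compl _ measurableSet_ball]
      _ ≤ _ := add_le_add hone htwo
  have e1 : μ S * μ S ^ (1 / q - 1) = μ S ^ (1 / q) := by
    nth_rewrite 1 [← ENNReal.rpow_one (μ S)]
    rw [← ENNReal.rpow_add _ _ hS0 hSt]; congr 1; ring
  have e2 : μ S ^ (1 - 1 / q) * μ S ^ (1 / q - 1) = 1 := by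
    rw [← ENNReal.rpow_add _ _ hS0 hSt]; simp
  calc ENNReal.ofReal γ * μ S ^ (1 / q) = ENNReal.ofReal γ * μ S * μ S ^ (1 / q - 1) := by
        rw [mul_assoc, e1]
    _ ≤ (K4 * F (2 * r) * μ S ^ (1 - 1 / q) + K5 * J * μ S) * μ S ^ (1 / q - 1) :=
        mul_le_mul_left hmain _
    _ = K4 * F (2 * r) + K5 * J * μ S ^ (1 / q) := by
        rw [add_mul, mul_assoc, e2, mul_assoc _ (μ S), e1, mul_one]
    _ ≤ K4 * (2 * D ^ (1 / q) * μ (ball a r) ^ (1 / q) * J) + K5 * J * μ (ball a r) ^ (1 / q) := by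
        gcongr
    _ = C * μ (ball a r) ^ (1 / q) * J := by rw [hC]; ring
    _ ≤ _ := by gcongr
end

section
/- Let 0 < α < n, 1 < p < n/α, 1/q = 1/p − α/n, and w ∈ A_{p,q}. Suppose ψ₁ and ψ₂ are positive functions on ℝⁿ × (0,∞) for which there is a constant C > 0, independent of a and r, with ∫_r^∞ (w^p(B(a,t))^{1/p} / w^q(B(a,t))^{1/q})·ψ₁(a,t) dt/t ≤ C·ψ₂(a,r) for every (a,r) ∈ ℝⁿ × (0,∞). Then I_α is bounded from M^{p,w^p}_{ψ₁} to M^{q,w^q}_{ψ₂}: there is C' > 0 such that ‖I_α f‖_{M^{q,w^q}_{ψ₂}} ≤ C'·‖f‖_{M^{p,w^p}_{ψ₁}} for every f ∈ M^{p,w^p}_{ψ₁}. -/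
open MeasureTheory Metric Set
open scoped ENNReal

open scoped NNReal

namespace MW

/-- growth of a lacunary sequence -/
lemma lac_up (t : ℤ → ℝ≥0∞) (η : ℝ≥0∞) (h : ∀ k, t k ≤ η * t (k + 1)) (k : ℤ) (j : ℕ) :
    t k ≤ η ^ j * t (k + j) := by
  induction j with
  | zero => simp
  | succ j ih =>
    calc t k ≤ η ^ j * t (k + j) := ih
      _ ≤ η ^ j * (η * t (k + j + 1)) := by gcongr; exact h _
      _ = _ := by rw [← mul_assoc, ← pow_succ]; congr 2; push_cast; ring

lemma lac_sum (a b : ℝ) (ha : 0 < a) (hb : 0 < b) (η : ℝ≥0∞) (hη : η < 1)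
    (t : ℤ → ℝ≥0∞) (h0 : ∀ k, t k ≠ 0) (ht : ∀ k, t k ≠ ⊤)
    (h : ∀ k, t k ≤ η * t (k + 1)) :
    ∑' k, min (t k ^ a) (t k ^ (-b)) ≤ (1 - η ^ b)⁻¹ + (1 - η ^ a)⁻¹ := by
  have hη0 : η ≠ 0 := by
    rintro rfl
    have := h 0
    simp at this
    exact h0 0 this
  have hηt : η ≠ ⊤ := hη.ne_top
  have hpow := ENNReal.tendsto_pow_atTop_nhds_zero_of_lt_one hη
  have hmono : Monotone t := by
    apply monotone_int_of_le_succ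
    intro k
    calc t k ≤ η * t (k + 1) := h k
      _ ≤ 1 * t (k + 1) := by gcongr
      _ = _ := one_mul _
  -- exists a small one
  have hex : ∃ k, t k ≤ 1 := by
    have h1 : Filter.Tendsto (fun j : ℕ => η ^ j * t 0) Filter.atTop (nhds (0 * t 0)) :=
      ENNReal.Tendsto.mul_const hpow (Or.inr (ht 0))
    rw [zero_mul] at h1
    obtain ⟨j, hj⟩ := (h1.eventually (gt_mem_nhds zero_lt_one)).exists
    refine ⟨-(j : ℤ), ?_⟩
    have := lac_up t η h (-(j : ℤ)) j
    simp only [neg_add_cancel] at this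
    exact this.trans hj.le
  have hbd : ∃ B, ∀ k, t k ≤ 1 → k ≤ B := by
    have h1 : Filter.Tendsto (fun j : ℕ => η ^ j * 1) Filter.atTop (nhds (0 * 1)) :=
      ENNReal.Tendsto.mul_const hpow (Or.inr (by simp))
    rw [zero_mul] at h1
    obtain ⟨j, hj⟩ := (h1.eventually (gt_mem_nhds (pos_iff_ne_zero.mpr (h0 0)))).exists
    refine ⟨j, fun k hk => ?_⟩
    by_contra hlt
    push Not at hlt
    have h2 := lac_up t η h 0 j
    have h3 : t (0 + (j : ℤ)) ≤ 1 := (hmono (by omega)).trans hk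
    have : t 0 ≤ η ^ j * 1 := h2.trans (by gcongr)
    exact absurd hj (not_lt.mpr this)
  obtain ⟨K, hK, hKmax⟩ := Int.exists_greatest_of_bdd hbd hex
  have hK1 : 1 ≤ t (K + 1) := by
    by_contra hlt
    push Not at hlt
    have := hKmax _ hlt.le
    omega
  rw [← (Equiv.addRight (K + 1)).tsum_eq (fun k => min (t k ^ a) (t k ^ (-b))),
    tsum_of_nat_of_neg_add_one ENNReal.summable ENNReal.summable]
  have geo : ∀ c : ℝ, ∑' j : ℕ, (η ^ j) ^ c = (1 - η ^ c)⁻¹ := by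
    intro c
    rw [← ENNReal.tsum_geometric]
    congr 1; ext j
    rw [← ENNReal.rpow_natCast, ← ENNReal.rpow_natCast, ← ENNReal.rpow_mul, ← ENNReal.rpow_mul,
      mul_comm]
  refine add_le_add ?_ ?_
  · rw [← geo b]
    refine ENNReal.tsum_le_tsum fun j => (min_le_right _ _).trans ?_
    simp only [Equiv.coe_addRight]
    rw [ENNReal.rpow_neg, ← ENNReal.inv_rpow]
    refine ENNReal.rpow_le_rpow ?_ hb.le
    rw [ENNReal.inv_le_iff_inv_le]
    have h2 := lac_up t η h (K + 1) j
    have h3 : (1 : ℝ≥0∞) ≤ η ^ j * t ((j : ℤ) + (K + 1)) := by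
      rw [add_comm (j : ℤ)]; exact hK1.trans h2
    exact ENNReal.inv_le_iff_le_mul (by simp [ht]) (by simp [h0]) |>.mpr h3
  · rw [← geo a]
    refine ENNReal.tsum_le_tsum fun j => (min_le_left _ _).trans ?_
    simp only [Equiv.coe_addRight]
    refine ENNReal.rpow_le_rpow ?_ ha.le
    have h2 := lac_up t η h (-((j : ℤ) + 1) + (K + 1)) j
    have : -((j : ℤ) + 1) + (K + 1) + j = K := by ring
    rw [this] at h2
    exact h2.trans (by simpa using mul_le_mul_right hK (η ^ j))

end MW
namespace MW

/-- Key embedding: averages over a family of sets, measured in the family space. -/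
lemma embed {X Y : Type*} [MeasurableSpace X] [MeasurableSpace Y] (M : Measure X) [SFinite M]
    (σ : Measure Y) [SFinite σ] (R : Set (X × Y)) (hR : MeasurableSet R) (p s : ℝ)
    (hp : 1 < p) (hps : p < s) (v : X → ℝ≥0∞) (hv : ∀ ξ, v ξ = σ {y | (ξ, y) ∈ R})
    (hv0 : ∀ ξ, v ξ ≠ 0) (hvt : ∀ ξ, v ξ ≠ ⊤) (K : ℝ≥0∞) (hK1 : K ≠ 0)
    (hsum : ∀ y V, V ≠ 0 → V ≠ ⊤ →
      ∫⁻ ξ, R.indicator 1 (ξ, y) *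
        min ((v ξ / V) ^ (s / p - 1)) ((v ξ / V) ^ (-(1 - 1 / p))) ∂M ≤ K)
    (h : Y → ℝ≥0∞) (hm : Measurable h) (ht : ∀ y, h y ≠ ⊤) :
    ∫⁻ ξ, (v ξ ^ (-(1 - 1 / p)) * ∫⁻ y, R.indicator 1 (ξ, y) * h y ∂σ) ^ s ∂M ≤
      2 ^ p * K * (∫⁻ y, h y ^ p ∂σ) ^ (s / p) := by
  have hp0 : 0 < p := by linarith
  have hs0 : 0 < s := by linarith
  have hb : 0 < 1 - 1 / p := by
    have : 1 / p < 1 := by rw [div_lt_one hp0]; exact hp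
    linarith
  set b : ℝ := 1 - 1 / p with hbdef
  set J := ∫⁻ y, h y ^ p ∂σ with hJ
  set H := J ^ (1 / p) with hH
  have hsp : 0 < s / p := by positivity
  have hvm : Measurable v := by
    have : v = fun ξ => σ (Prod.mk ξ ⁻¹' R) := by ext ξ; rw [hv]; rfl
    rw [this]; exact measurable_measure_prodMk_left hR
  have hRsec : ∀ ξ, MeasurableSet {y | (ξ, y) ∈ R} := fun ξ => measurable_prodMk_left hR
  have hind : ∀ ξ (φ : Y → ℝ≥0∞), ∫⁻ y, R.indicator 1 (ξ, y) * φ y ∂σ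
      = ∫⁻ y in {y | (ξ, y) ∈ R}, φ y ∂σ := by
    intro ξ φ
    rw [← lintegral_indicator (hRsec ξ)]
    congr 1; ext y
    by_cases hy : (ξ, y) ∈ R <;> simp [hy]
  set I : X → ℝ≥0∞ := fun ξ => ∫⁻ y, R.indicator 1 (ξ, y) * h y ∂σ with hI
  set A : X → ℝ≥0∞ := fun ξ => v ξ ^ (-b) * I ξ with hA
  -- Hölder bound
  have hAH : ∀ ξ, A ξ ≤ H := by
    intro ξ
    have hc : p.HolderConjugate (Real.conjExponent p) := Real.HolderConjugate.conjExponent hp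
    have h1 : I ξ ≤ H * v ξ ^ b := by
      have := ENNReal.lintegral_mul_le_Lp_mul_Lq (σ.restrict {y | (ξ, y) ∈ R}) hc
        (f := h) (g := fun _ => 1) hm.aemeasurable aemeasurable_const
      simp only [Pi.mul_apply, mul_one, ENNReal.one_rpow, lintegral_const, Measure.restrict_apply,
        MeasurableSet.univ, univ_inter, one_mul] at this
      simp only [hI]
      rw [hind]
      refine this.trans ?_
      have e : 1 / Real.conjExponent p = b := by
        have := hc.inv_add_inv_eq_one
        rw [hbdef]; simp only [one_div]; linarith
      rw [e, ← hv]
      rw [hH]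
      gcongr
      exact setLIntegral_le_lintegral _ _
    calc A ξ ≤ v ξ ^ (-b) * (H * v ξ ^ b) := by simp only [hA]; gcongr
      _ = H * (v ξ ^ (-b) * v ξ ^ b) := by ring
      _ = H := by
        rw [← ENNReal.rpow_add _ _ (hv0 ξ) (hvt ξ)]; simp
  rcases eq_or_ne J 0 with hJ0 | hJ0
  · have hH0 : H = 0 := by rw [hH, hJ0]; exact ENNReal.zero_rpow_of_pos (by positivity)
    have : ∀ ξ, A ξ ^ s = 0 := by
      intro ξ
      have := hAH ξ
      rw [hH0] at this
      rw [nonpos_iff_eq_zero.mp this]; exact ENNReal.zero_rpow_of_pos hs0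
    calc _ = ∫⁻ ξ, A ξ ^ s ∂M := rfl
      _ = 0 := by simp only [this, lintegral_zero]
      _ ≤ _ := zero_le
  rcases eq_or_ne J ⊤ with hJt | hJt
  · rw [hJt, ENNReal.top_rpow_of_pos hsp, ENNReal.mul_top]
    · exact le_top
    · refine mul_ne_zero ?_ hK1
      simp [hp0.le, ENNReal.rpow_eq_zero_iff]
  have hH0 : H ≠ 0 := by simp [hH, ENNReal.rpow_eq_zero_iff, hJ0, hJt]
  have hHt : H ≠ ⊤ := by simp [hH, ENNReal.rpow_eq_top_iff, hJ0, hJt]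
  have hIt : ∀ ξ, I ξ ≠ ⊤ := by
    intro ξ hi
    have := hAH ξ
    simp only [hA, hi] at this
    rw [ENNReal.mul_top] at this
    · exact hHt (top_le_iff.mp this)
    · simp [ENNReal.rpow_eq_zero_iff, hv0, hvt]
  set V : Y → ℝ≥0∞ := fun y => (H / (2 * h y)) ^ p with hV
  set S : X → ℝ≥0∞ := fun ξ => I ξ / v ξ with hS
  have hIS : ∀ ξ, I ξ ≤ 2 * ∫⁻ y, R.indicator 1 (ξ, y) * ({y | S ξ < 2 * h y}.indicator h y) ∂σ := by
    intro ξ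
    set T := ∫⁻ y, R.indicator 1 (ξ, y) * ({y | S ξ < 2 * h y}.indicator h y) ∂σ
    have h1 : I ξ ≤ T + I ξ / 2 := by
      calc I ξ ≤ ∫⁻ y, (R.indicator 1 (ξ, y) * ({y | S ξ < 2 * h y}.indicator h y)
            + R.indicator 1 (ξ, y) * (S ξ / 2)) ∂σ := by
            refine lintegral_mono fun y => ?_
            rw [← mul_add]
            gcongr
            by_cases hy : S ξ < 2 * h y
            · simp [hy]
            · simp only [mem_ofPred_eq, hy, not_false_eq_true, indicator_of_notMem, zero_add]
              rw [ENNReal.le_div_iff_mul_le (by simp) (by simp), mul_comm]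
              exact not_lt.mp hy
        _ = T + ∫⁻ y, R.indicator 1 (ξ, y) * (S ξ / 2) ∂σ := by
            rw [lintegral_add_right]
            refine Measurable.mul_const ?_ _
            exact (measurable_const.indicator hR).comp measurable_prodMk_left
        _ = T + I ξ / 2 := by
            congr 1
            rw [hind]
            simp only [lintegral_const, Measure.restrict_apply, MeasurableSet.univ, univ_inter]
            rw [← hv, hS]
            simp only
            rw [div_eq_mul_inv, div_eq_mul_inv, div_eq_mul_inv]
            calc I ξ * (v ξ)⁻¹ * 2⁻¹ * v ξ = I ξ * 2⁻¹ * ((v ξ)⁻¹ * v ξ) := by ring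
              _ = _ := by rw [ENNReal.inv_mul_cancel (hv0 ξ) (hvt ξ), mul_one]
    have h2 : I ξ / 2 + I ξ / 2 ≤ T + I ξ / 2 := by rwa [ENNReal.add_halves]
    have h3 : I ξ / 2 ≤ T := (ENNReal.add_le_add_iff_right
      (ENNReal.div_ne_top (hIt ξ) (by simp))).mp h2
    rw [ENNReal.div_le_iff_le_mul (by simp) (by simp)] at h3
    rwa [mul_comm]
  -- pointwise bound
  have hpt : ∀ ξ y, A ξ ^ (s - 1) * v ξ ^ (-b) * ({y | S ξ < 2 * h y}.indicator h y) ≤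
      h y * (H ^ (s - 1) * V y ^ (-b)) *
        min ((v ξ / V y) ^ (s / p - 1)) ((v ξ / V y) ^ (-b)) := by
    intro ξ y
    by_cases hy : S ξ < 2 * h y
    swap
    · simp [hy]
    simp only [mem_ofPred_eq, hy, indicator_of_mem]
    have hh0 : 2 * h y ≠ 0 := (zero_le.trans_lt hy).ne'
    have hht : 2 * h y ≠ ⊤ := ENNReal.mul_ne_top (by simp) (ht y)
    have hq0 : H / (2 * h y) ≠ 0 := by simp only [ne_eq, ENNReal.div_eq_zero_iff, not_or]; exact ⟨hH0, hht⟩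
    have hqt : H / (2 * h y) ≠ ⊤ := ENNReal.div_ne_top hHt hh0
    have hV0 : V y ≠ 0 := by simp [hV, ENNReal.rpow_eq_zero_iff, hq0, hqt, hp0.le]
    have hVt : V y ≠ ⊤ := by simp [hV, ENNReal.rpow_eq_top_iff, hq0, hqt, hp0.le]
    have hr0 : v ξ / V y ≠ 0 := by simp [ENNReal.div_eq_zero_iff, hv0, hVt]
    have hrt : v ξ / V y ≠ ⊤ := ENNReal.div_ne_top (hvt ξ) hV0
    have hvV : v ξ = V y * (v ξ / V y) := (ENNReal.mul_div_cancel hV0 hVt).symm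
    have hvb : v ξ ^ (-b) = V y ^ (-b) * (v ξ / V y) ^ (-b) := by
      conv_lhs => rw [hvV]
      rw [ENNReal.mul_rpow_of_ne_top hVt hrt]
    have hs1 : 0 ≤ s - 1 := by linarith
    have hA2 : A ξ ≤ H * (v ξ / V y) ^ (1 / p) := by
      have e1 : A ξ = v ξ ^ (1 / p) * S ξ := by
        simp only [hA, hS]
        have : -b = 1 / p - 1 := by rw [hbdef]; ring
        rw [this, ENNReal.rpow_sub _ _ (hv0 ξ) (hvt ξ), ENNReal.rpow_one, div_eq_mul_inv,
          div_eq_mul_inv (I ξ)]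
        ring
      have e2 : (V y) ^ (1 / p) = H / (2 * h y) := by
        simp only [hV]
        rw [← ENNReal.rpow_mul, mul_one_div_cancel hp0.ne', ENNReal.rpow_one]
      rw [e1, ENNReal.div_rpow_of_nonneg _ _ (by positivity), e2, mul_comm H,
        ENNReal.div_eq_inv_mul, ENNReal.inv_div (Or.inl hht) (Or.inl hh0), ]
      calc v ξ ^ (1 / p) * S ξ ≤ v ξ ^ (1 / p) * (2 * h y) := by gcongr
        _ = v ξ ^ (1 / p) * ((2 * h y / H) * H) := by rw [ENNReal.div_mul_cancel hH0 hHt]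
        _ = _ := by ring
    have key : A ξ ^ (s - 1) * v ξ ^ (-b) ≤ (H ^ (s - 1) * V y ^ (-b)) *
        min ((v ξ / V y) ^ (s / p - 1)) ((v ξ / V y) ^ (-b)) := by
      rw [hvb]
      rcases min_choice ((v ξ / V y) ^ (s / p - 1)) ((v ξ / V y) ^ (-b)) with hmn | hmn
      · rw [hmn]
        have e3 : s / p - 1 = (1 / p) * (s - 1) + (-b) := by rw [hbdef]; field_simp; ring
        rw [e3, ENNReal.rpow_add _ _ hr0 hrt, ENNReal.rpow_mul]
        calc A ξ ^ (s - 1) * (V y ^ (-b) * (v ξ / V y) ^ (-b))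
            ≤ (H * (v ξ / V y) ^ (1 / p)) ^ (s - 1) * (V y ^ (-b) * (v ξ / V y) ^ (-b)) := by gcongr
          _ = _ := by rw [ENNReal.mul_rpow_of_nonneg _ _ hs1]; ring
      · rw [hmn]
        calc A ξ ^ (s - 1) * (V y ^ (-b) * (v ξ / V y) ^ (-b))
            ≤ H ^ (s - 1) * (V y ^ (-b) * (v ξ / V y) ^ (-b)) := by gcongr; exact hAH ξ
          _ = _ := by ring
    calc _ ≤ (H ^ (s - 1) * V y ^ (-b)) *
        min ((v ξ / V y) ^ (s / p - 1)) ((v ξ / V y) ^ (-b)) * h y := by gcongr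
      _ = _ := by ring
  have hAs : ∀ ξ, A ξ ^ s ≤ 2 * ∫⁻ y, R.indicator 1 (ξ, y) * (h y * (H ^ (s - 1) * V y ^ (-b)) *
        min ((v ξ / V y) ^ (s / p - 1)) ((v ξ / V y) ^ (-b))) ∂σ := by
    intro ξ
    have hAt : A ξ ≠ ⊤ := ((hAH ξ).trans_lt hHt.lt_top).ne
    have h1 : A ξ ^ s = A ξ ^ (s - 1) * A ξ := by
      rcases eq_or_ne (A ξ) 0 with h0 | h0
      · rw [h0, ENNReal.zero_rpow_of_pos hs0]; simp
      · rw [ENNReal.rpow_sub _ _ h0 hAt, ENNReal.rpow_one, ENNReal.div_mul_cancel h0 hAt]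
    have hct : A ξ ^ (s - 1) * v ξ ^ (-b) ≠ ⊤ := by
      refine ENNReal.mul_ne_top (ENNReal.rpow_ne_top_of_nonneg (by linarith) hAt) ?_
      simp [ENNReal.rpow_eq_top_iff, hv0, hvt]
    calc A ξ ^ s = A ξ ^ (s - 1) * (v ξ ^ (-b) * I ξ) := h1
      _ ≤ A ξ ^ (s - 1) * (v ξ ^ (-b) *
          (2 * ∫⁻ y, R.indicator 1 (ξ, y) * ({y | S ξ < 2 * h y}.indicator h y) ∂σ)) := by
            gcongr; exact hIS ξ
      _ = 2 * ((A ξ ^ (s - 1) * v ξ ^ (-b)) *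
          ∫⁻ y, R.indicator 1 (ξ, y) * ({y | S ξ < 2 * h y}.indicator h y) ∂σ) := by ring
      _ = 2 * ∫⁻ y, (A ξ ^ (s - 1) * v ξ ^ (-b)) *
          (R.indicator 1 (ξ, y) * ({y | S ξ < 2 * h y}.indicator h y)) ∂σ := by
            rw [lintegral_const_mul' _ _ hct]
      _ ≤ _ := by
        refine mul_le_mul_right (lintegral_mono fun y => ?_) _
        calc _ = R.indicator 1 (ξ, y) * ((A ξ ^ (s - 1) * v ξ ^ (-b)) *
            ({y | S ξ < 2 * h y}.indicator h y)) := by ring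
          _ ≤ _ := mul_le_mul_right (hpt ξ y) _
  have hVm : Measurable V := by
    simp only [hV]
    exact (measurable_const.div (hm.const_mul 2)).pow_const p
  have hRm : Measurable (R.indicator (1 : X × Y → ℝ≥0∞)) := measurable_one.indicator hR
  calc ∫⁻ ξ, A ξ ^ s ∂M ≤ ∫⁻ ξ, 2 * ∫⁻ y, R.indicator 1 (ξ, y) *
        (h y * (H ^ (s - 1) * V y ^ (-b)) *
        min ((v ξ / V y) ^ (s / p - 1)) ((v ξ / V y) ^ (-b))) ∂σ ∂M := lintegral_mono hAs
    _ = 2 * ∫⁻ ξ, ∫⁻ y, R.indicator 1 (ξ, y) * (h y * (H ^ (s - 1) * V y ^ (-b)) *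
        min ((v ξ / V y) ^ (s / p - 1)) ((v ξ / V y) ^ (-b))) ∂σ ∂M := by
          rw [lintegral_const_mul' _ _ (by simp)]
    _ = 2 * ∫⁻ y, ∫⁻ ξ, R.indicator 1 (ξ, y) * (h y * (H ^ (s - 1) * V y ^ (-b)) *
        min ((v ξ / V y) ^ (s / p - 1)) ((v ξ / V y) ^ (-b))) ∂M ∂σ := by
          rw [lintegral_lintegral_swap]
          refine Measurable.aemeasurable ?_
          refine hRm.mul (Measurable.mul ?_ (Measurable.min ?_ ?_)) <;> fun_prop
    _ ≤ 2 * ∫⁻ y, (2 ^ (p - 1) * K * H ^ (s - p)) * h y ^ p ∂σ := by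
          gcongr with y
          rcases eq_or_ne (h y) 0 with hy0 | hy0
          · simp [hy0]
          have hh0 : 2 * h y ≠ 0 := by simp [hy0]
          have hht : 2 * h y ≠ ⊤ := ENNReal.mul_ne_top (by simp) (ht y)
          have hq0 : H / (2 * h y) ≠ 0 := by
            simp only [ne_eq, ENNReal.div_eq_zero_iff, not_or]; exact ⟨hH0, hht⟩
          have hqt : H / (2 * h y) ≠ ⊤ := ENNReal.div_ne_top hHt hh0
          have hV0 : V y ≠ 0 := by simp [hV, ENNReal.rpow_eq_zero_iff, hq0, hqt, hp0.le]
          have hVt : V y ≠ ⊤ := by simp [hV, ENNReal.rpow_eq_top_iff, hq0, hqt, hp0.le]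
          have hVb : V y ^ (-b) = 2 ^ (p - 1) * h y ^ (p - 1) * H ^ (-(p - 1)) := by
            simp only [hV]
            rw [← ENNReal.rpow_mul]
            have : p * -b = -(p - 1) := by rw [hbdef]; field_simp
            rw [this, ENNReal.rpow_neg, ← ENNReal.inv_rpow, ENNReal.inv_div (Or.inl hht) (Or.inl hh0),
              ENNReal.div_rpow_of_nonneg _ _ (by linarith),
              ENNReal.mul_rpow_of_nonneg _ _ (by linarith), ENNReal.rpow_neg, div_eq_mul_inv]
          have hct : h y * (H ^ (s - 1) * V y ^ (-b)) ≠ ⊤ := by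
            refine ENNReal.mul_ne_top (ht y) (ENNReal.mul_ne_top ?_ ?_)
            · simp [ENNReal.rpow_eq_top_iff, hH0, hHt]
            · simp [ENNReal.rpow_eq_top_iff, hV0, hVt]
          calc _ = ∫⁻ ξ, (h y * (H ^ (s - 1) * V y ^ (-b))) * (R.indicator 1 (ξ, y) *
                min ((v ξ / V y) ^ (s / p - 1)) ((v ξ / V y) ^ (-b))) ∂M := by
                  congr 1; ext ξ; ring
            _ = (h y * (H ^ (s - 1) * V y ^ (-b))) * ∫⁻ ξ, (R.indicator 1 (ξ, y) *
                min ((v ξ / V y) ^ (s / p - 1)) ((v ξ / V y) ^ (-b))) ∂M := by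
                  rw [lintegral_const_mul' _ _ hct]
            _ ≤ (h y * (H ^ (s - 1) * V y ^ (-b))) * K := by
                  gcongr; exact hsum y (V y) hV0 hVt
            _ = _ := by
              rw [hVb]
              have e4 : H ^ (s - p) = H ^ (s - 1) * H ^ (-(p - 1)) := by
                rw [← ENNReal.rpow_add _ _ hH0 hHt]; congr 1; ring
              have e5 : h y ^ p = h y * h y ^ (p - 1) := by
                rw [ENNReal.rpow_sub _ _ hy0 (ht y), ENNReal.rpow_one,
                  ENNReal.mul_div_cancel hy0 (ht y)]
              rw [e4, e5]; ring
    _ = 2 * (2 ^ (p - 1) * K * H ^ (s - p)) * J := by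
          rw [lintegral_const_mul _ (hm.pow_const p), ← hJ]; ring
    _ = 2 ^ p * K * J ^ (s / p) := by
          have e6 : (2 : ℝ≥0∞) ^ p = 2 * 2 ^ (p - 1) := by
            rw [ENNReal.rpow_sub _ _ (by simp) (by simp), ENNReal.rpow_one,
                  ENNReal.mul_div_cancel (by simp) (by simp)]
          have e7 : J ^ (s / p) = H ^ (s - p) * J := by
            have : J = J ^ (1 : ℝ) := by simp
            rw [hH, ← ENNReal.rpow_mul]
            conv_rhs => rw [this, ← ENNReal.rpow_mul, ← ENNReal.rpow_add _ _ hJ0 hJt]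
            congr 1; field_simp; ring
          rw [e6, e7]; ring

end MW
namespace MW

/-- doubling and reverse doubling -/
def Dbl {n : ℕ} (σ : Measure (EuclideanSpace ℝ (Fin n))) (D η : ℝ≥0∞) : Prop :=
  D ≠ ⊤ ∧ η < 1 ∧ ∀ (y : EuclideanSpace ℝ (Fin n)) (r : ℝ), 0 < r →
    σ (ball y r) ≠ 0 ∧ σ (ball y r) ≠ ⊤ ∧ σ (ball y (2 * r)) ≤ D * σ (ball y r) ∧
      σ (ball y r) ≤ η * σ (ball y (2 * r))

/-- dyadic radius -/
noncomputable def rad (k : ℤ) : ℝ := (2 : ℝ) ^ k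

lemma rad_pos (k : ℤ) : 0 < rad k := by unfold rad; positivity

lemma rad_succ (k : ℤ) : rad (k + 1) = 2 * rad k := by
  unfold rad; rw [zpow_add₀ (by norm_num)]; simp [mul_comm]

/-- the measure on the space of dyadic balls -/
noncomputable def Msc (n : ℕ) : Measure (ℤ × EuclideanSpace ℝ (Fin n)) :=
  ((Measure.count : Measure ℤ).withDensity
    (fun k => (volume (ball (0 : EuclideanSpace ℝ (Fin n)) (rad k)))⁻¹)).prod volume

noncomputable instance (n : ℕ) : SFinite (Msc n) := by unfold Msc; infer_instance

/-- incidence relation -/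
def Rel (n : ℕ) : Set ((ℤ × EuclideanSpace ℝ (Fin n)) × EuclideanSpace ℝ (Fin n)) :=
  {P | dist P.2 P.1.2 < rad P.1.1}

lemma measurable_rad : Measurable rad := measurable_from_top

lemma Rel_meas (n : ℕ) : MeasurableSet (Rel n) := by
  unfold Rel
  refine measurableSet_lt ?_ ?_
  · fun_prop
  · exact measurable_rad.comp (measurable_fst.comp measurable_fst)

lemma Rel_sec {n : ℕ} (ξ : ℤ × EuclideanSpace ℝ (Fin n)) :
    {y | (ξ, y) ∈ Rel n} = ball ξ.2 (rad ξ.1) := by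
  ext y; simp [Rel]

lemma lint_Msc {n : ℕ} (φ : ℤ × EuclideanSpace ℝ (Fin n) → ℝ≥0∞) (hφ : Measurable φ) :
    ∫⁻ ξ, φ ξ ∂(Msc n) =
      ∑' k, (volume (ball (0 : EuclideanSpace ℝ (Fin n)) (rad k)))⁻¹ * ∫⁻ z, φ (k, z) := by
  unfold Msc
  rw [lintegral_prod _ hφ.aemeasurable, lintegral_withDensity_eq_lintegral_mul _ measurable_from_top
    measurable_from_top, lintegral_count]
  rfl

lemma phi_scale (a b : ℝ) (ha : 0 < a) (hb : 0 < b) (D : ℝ≥0∞) (hD : D ≠ ⊤) (hD1 : 1 ≤ D)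
    (v m V : ℝ≥0∞)
    (hv : v ≤ D * m) (hm : m ≤ D * v) :
    min ((v / V) ^ a) ((v / V) ^ (-b)) ≤ D ^ (a + b) * min ((m / V) ^ a) ((m / V) ^ (-b)) := by
  have hD0 : D ≠ 0 := by rintro rfl; simp at hD1
  have hDa : D ^ a ≤ D ^ (a + b) := ENNReal.rpow_le_rpow_of_exponent_le hD1 (by linarith)
  have hDb : D ^ b ≤ D ^ (a + b) := ENNReal.rpow_le_rpow_of_exponent_le hD1 (by linarith)
  have h1 : (v / V) ^ a ≤ D ^ (a + b) * (m / V) ^ a := by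
    calc (v / V) ^ a ≤ (D * (m / V)) ^ a := by
          refine ENNReal.rpow_le_rpow ?_ ha.le
          rw [← mul_div_assoc]; exact ENNReal.div_le_div_right hv _
      _ = D ^ a * (m / V) ^ a := ENNReal.mul_rpow_of_nonneg _ _ ha.le
      _ ≤ _ := by gcongr
  have h2 : (v / V) ^ (-b) ≤ D ^ (a + b) * (m / V) ^ (-b) := by
    have h3 : (m / V) ^ b ≤ D ^ b * (v / V) ^ b := by
      calc (m / V) ^ b ≤ (D * (v / V)) ^ b := by
            refine ENNReal.rpow_le_rpow ?_ hb.le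
            rw [← mul_div_assoc]; exact ENNReal.div_le_div_right hm _
        _ = D ^ b * (v / V) ^ b := ENNReal.mul_rpow_of_nonneg _ _ hb.le
    rw [ENNReal.rpow_neg, ENNReal.rpow_neg]
    have hb0 : D ^ b ≠ 0 := by simp [ENNReal.rpow_eq_zero_iff, hD0, hD]
    have hbt : D ^ b ≠ ⊤ := ENNReal.rpow_ne_top_of_nonneg hb.le hD
    calc ((v / V) ^ b)⁻¹ = D ^ b * (D ^ b * (v / V) ^ b)⁻¹ := by
          rw [ENNReal.mul_inv (Or.inl hb0) (Or.inl hbt), ← mul_assoc,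
            ENNReal.mul_inv_cancel hb0 hbt, one_mul]
      _ ≤ D ^ b * ((m / V) ^ b)⁻¹ := by gcongr
      _ ≤ _ := by gcongr
  rw [mul_min]
  exact min_le_min h1 h2

lemma vol_ball_eq {n : ℕ} (z : EuclideanSpace ℝ (Fin n)) (r : ℝ) :
    volume (ball z r) = volume (ball (0 : EuclideanSpace ℝ (Fin n)) r) :=
  Measure.addHaar_ball_center volume z r

lemma vol_ne_zero {n : ℕ} (z : EuclideanSpace ℝ (Fin n)) {r : ℝ} (hr : 0 < r) :
    volume (ball z r) ≠ 0 := (measure_ball_pos volume z hr).ne'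

lemma vol_ne_top {n : ℕ} (z : EuclideanSpace ℝ (Fin n)) (r : ℝ) :
    volume (ball z r) ≠ ⊤ := measure_ball_lt_top.ne

lemma v_meas {n : ℕ} (σ : Measure (EuclideanSpace ℝ (Fin n))) [SFinite σ] :
    Measurable (fun ξ : ℤ × EuclideanSpace ℝ (Fin n) => σ (ball ξ.2 (rad ξ.1))) := by
  have : (fun ξ : ℤ × EuclideanSpace ℝ (Fin n) => σ (ball ξ.2 (rad ξ.1)))
      = fun ξ => σ (Prod.mk ξ ⁻¹' Rel n) := by
    ext ξ; rw [← Rel_sec]; rfl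
  rw [this]; exact measurable_measure_prodMk_left (Rel_meas n)

lemma hsum_Dbl {n : ℕ} (σ : Measure (EuclideanSpace ℝ (Fin n))) [SFinite σ] (D η : ℝ≥0∞)
    (hσ : Dbl σ D η) (a b : ℝ) (ha : 0 < a) (hb : 0 < b) :
    ∃ K : ℝ≥0∞, K ≠ 0 ∧ K ≠ ⊤ ∧ ∀ y V, V ≠ 0 → V ≠ ⊤ →
      ∫⁻ ξ, (Rel n).indicator 1 (ξ, y) *
        min ((σ (ball ξ.2 (rad ξ.1)) / V) ^ a) ((σ (ball ξ.2 (rad ξ.1)) / V) ^ (-b)) ∂(Msc n) ≤ K := by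
  obtain ⟨hD, hη, hall⟩ := hσ
  have hD1 : 1 ≤ D + 1 := by simp
  have hDt : D + 1 ≠ ⊤ := by simp [hD]
  have hηa : ∀ c : ℝ, 0 < c → (1 - η ^ c)⁻¹ ≠ ⊤ := by
    intro c hc
    have : η ^ c < 1 := ENNReal.rpow_lt_one hη hc
    simp [tsub_eq_zero_iff_le, this]
  refine ⟨(D + 1) ^ (a + b) * ((1 - η ^ b)⁻¹ + (1 - η ^ a)⁻¹), ?_, ?_, ?_⟩
  · refine mul_ne_zero ?_ ?_
    · simp [ENNReal.rpow_eq_zero_iff, hDt]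
    · simp only [ne_eq, add_eq_zero, ENNReal.inv_eq_zero, not_and_or]
      left
      exact (lt_of_le_of_lt tsub_le_self ENNReal.one_lt_top).ne
  · refine ENNReal.mul_ne_top (ENNReal.rpow_ne_top_of_nonneg (by linarith) hDt) ?_
    exact ENNReal.add_ne_top.mpr ⟨hηa b hb, hηa a ha⟩
  intro y V hV0 hVt
  rw [lint_Msc]
  swap
  · have h1 : Measurable fun ξ : ℤ × EuclideanSpace ℝ (Fin n) =>
        ((Rel n).indicator 1 (ξ, y) : ℝ≥0∞) :=
      (measurable_one.indicator (Rel_meas n)).comp measurable_prodMk_right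
    have h2 := (v_meas σ).div_const V
    exact h1.mul ((h2.pow_const a).min (h2.pow_const (-b)))
  calc _ ≤ ∑' k, (D + 1) ^ (a + b) * min ((σ (ball y (rad k)) / V) ^ a)
        ((σ (ball y (rad k)) / V) ^ (-b)) := by
        refine ENNReal.tsum_le_tsum fun k => ?_
        have hk := rad_pos k
        have hk1 := rad_succ k
        set c := (D + 1) ^ (a + b) * min ((σ (ball y (rad k)) / V) ^ a)
          ((σ (ball y (rad k)) / V) ^ (-b)) with hc
        have : ∀ z, (Rel n).indicator 1 ((k, z), y) *
            min ((σ (ball z (rad k)) / V) ^ a) ((σ (ball z (rad k)) / V) ^ (-b)) ≤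
            (ball y (rad k)).indicator (fun _ => c) z := by
          intro z
          by_cases hz : dist y z < rad k
          · have hm : ((k, z), y) ∈ Rel n := hz
            have hm2 : z ∈ ball y (rad k) := by rwa [mem_ball, dist_comm]
            simp only [hm, hm2, indicator_of_mem, Pi.one_apply, one_mul]
            refine phi_scale a b ha hb (D + 1) hDt hD1 _ _ _ ?_ ?_
            · calc σ (ball z (rad k)) ≤ σ (ball y (2 * rad k)) := by
                    refine measure_mono (ball_subset_ball' ?_)
                    rw [dist_comm]; linarith
                _ ≤ D * σ (ball y (rad k)) := (hall y _ hk).2.2.1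
                _ ≤ _ := by gcongr; simp
            · calc σ (ball y (rad k)) ≤ σ (ball z (2 * rad k)) := by
                    refine measure_mono (ball_subset_ball' ?_)
                    linarith
                _ ≤ D * σ (ball z (rad k)) := (hall z _ hk).2.2.1
                _ ≤ _ := by gcongr; simp
          · have hm : ((k, z), y) ∉ Rel n := hz
            simp [hm]
        calc _ ≤ (volume (ball (0 : EuclideanSpace ℝ (Fin n)) (rad k)))⁻¹ *
              ∫⁻ z, (ball y (rad k)).indicator (fun _ => c) z :=
              mul_le_mul_right (lintegral_mono this) _
          _ = c := by
            rw [lintegral_indicator measurableSet_ball, setLIntegral_const, vol_ball_eq y, mul_comm c,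
              ← mul_assoc, ENNReal.inv_mul_cancel (vol_ne_zero _ hk) (vol_ne_top _ _), one_mul]
    _ = (D + 1) ^ (a + b) * ∑' k, min ((σ (ball y (rad k)) / V) ^ a)
        ((σ (ball y (rad k)) / V) ^ (-b)) := ENNReal.tsum_mul_left
    _ ≤ _ := by
        gcongr
        refine lac_sum a b ha hb η hη (fun k => σ (ball y (rad k)) / V) ?_ ?_ ?_
        · intro k
          simp [ENNReal.div_eq_zero_iff, (hall y _ (rad_pos k)).1, hVt]
        · intro k
          exact ENNReal.div_ne_top (hall y _ (rad_pos k)).2.1 hV0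
        · intro k
          rw [← mul_div_assoc, rad_succ]
          exact ENNReal.div_le_div_right (hall y _ (rad_pos k)).2.2.2 _

end MW
namespace MW

lemma vol_two {n : ℕ} (z : EuclideanSpace ℝ (Fin n)) {r : ℝ} (hr : 0 < r) :
    volume (ball z (2 * r)) = 2 ^ n * volume (ball z r) := by
  rw [Measure.addHaar_ball_of_pos volume z hr, Measure.addHaar_ball_of_pos volume z (by linarith),
    mul_pow, ENNReal.ofReal_mul (by positivity), ← mul_assoc]
  congr 2
  simp [ENNReal.ofReal_pow]

/-- the kernel -/
noncomputable def ker {n : ℕ} (β : ℝ) (x y : EuclideanSpace ℝ (Fin n)) : ℝ≥0∞ :=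
  (ENNReal.ofReal (dist x y ^ β))⁻¹

lemma ker_meas {n : ℕ} (β : ℝ) :
    Measurable (fun P : EuclideanSpace ℝ (Fin n) × EuclideanSpace ℝ (Fin n) => ker β P.1 P.2) := by
  unfold ker
  have : Measurable (fun P : EuclideanSpace ℝ (Fin n) × EuclideanSpace ℝ (Fin n) =>
    dist P.1 P.2) := by fun_prop
  exact ((this.pow_const β).ennreal_ofReal).inv

/-- scale weight -/
noncomputable def rho (β : ℝ) (k : ℤ) : ℝ≥0∞ := (ENNReal.ofReal (rad k ^ β))⁻¹

lemma ind_meas_left {n : ℕ} (y : EuclideanSpace ℝ (Fin n)) :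
    Measurable fun ξ : ℤ × EuclideanSpace ℝ (Fin n) => ((Rel n).indicator 1 (ξ, y) : ℝ≥0∞) :=
  (measurable_one.indicator (Rel_meas n)).comp measurable_prodMk_right

lemma rho_meas {n : ℕ} (β : ℝ) :
    Measurable fun ξ : ℤ × EuclideanSpace ℝ (Fin n) => rho β ξ.1 :=
  (measurable_from_top (f := rho β)).comp measurable_fst

lemma ker_le {n : ℕ} (β : ℝ) (hβ : 0 < β) (x y : EuclideanSpace ℝ (Fin n)) (hxy : x ≠ y) :
    ker β x y ≤ (2 ^ n * ENNReal.ofReal (4 ^ β)) *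
      ∫⁻ ξ, (Rel n).indicator 1 (ξ, x) * ((Rel n).indicator 1 (ξ, y) * rho β ξ.1) ∂(Msc n) := by
  have hd : 0 < dist x y := dist_pos.mpr hxy
  obtain ⟨k, hk1, hk2⟩ := exists_mem_Ico_zpow hd (one_lt_two)
  change rad k ≤ dist x y at hk1
  change dist x y < rad (k + 1) at hk2
  have hk := rad_pos (k + 1)
  have hk4 : rad (k + 1 + 1) = 4 * rad k := by rw [rad_succ, rad_succ]; ring
  rw [lint_Msc]
  swap
  · exact (ind_meas_left x).mul ((ind_meas_left y).mul (rho_meas β))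
  have h1 : (volume (ball (0 : EuclideanSpace ℝ (Fin n)) (rad (k + 1 + 1))))⁻¹ *
      ∫⁻ z, (Rel n).indicator 1 ((k + 1 + 1, z), x) *
        ((Rel n).indicator 1 ((k + 1 + 1, z), y) * rho β (k + 1 + 1)) ≤
      ∑' j, (volume (ball (0 : EuclideanSpace ℝ (Fin n)) (rad j)))⁻¹ *
      ∫⁻ z, (Rel n).indicator 1 ((j, z), x) *
        ((Rel n).indicator 1 ((j, z), y) * rho β j) :=
    ENNReal.le_tsum (f := fun j => (volume (ball (0 : EuclideanSpace ℝ (Fin n)) (rad j)))⁻¹ *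
      ∫⁻ z, (Rel n).indicator 1 ((j, z), x) *
        ((Rel n).indicator 1 ((j, z), y) * rho β j)) (k + 1 + 1)
  refine le_trans ?_ (mul_le_mul_right h1 _)
  have h2 : volume (ball (0 : EuclideanSpace ℝ (Fin n)) (rad (k + 1))) * rho β (k + 1 + 1) ≤
      ∫⁻ z, (Rel n).indicator 1 ((k + 1 + 1, z), x) *
        ((Rel n).indicator 1 ((k + 1 + 1, z), y) * rho β (k + 1 + 1)) := by
    rw [← vol_ball_eq x, mul_comm, ← setLIntegral_const, ← lintegral_indicator measurableSet_ball]
    refine lintegral_mono fun z => ?_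
    by_cases hz : z ∈ ball x (rad (k + 1))
    · rw [mem_ball] at hz
      have m1 : ((k + 1 + 1, z), x) ∈ Rel n := by
        change dist x z < rad (k + 1 + 1)
        rw [dist_comm, rad_succ]; linarith
      have m2 : ((k + 1 + 1, z), y) ∈ Rel n := by
        change dist y z < rad (k + 1 + 1)
        rw [rad_succ]
        have := dist_triangle y x z
        rw [dist_comm y x, dist_comm x z] at this; linarith
      simp [hz, m1, m2]
    · simp [hz]
  have hv0 := vol_ne_zero (0 : EuclideanSpace ℝ (Fin n)) hk
  have hvt := vol_ne_top (0 : EuclideanSpace ℝ (Fin n)) (rad (k + 1))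
  calc ker β x y ≤ ENNReal.ofReal (4 ^ β) * rho β (k + 1 + 1) := by
        unfold ker rho
        have : rad (k + 1 + 1) ^ β = 4 ^ β * rad k ^ β := by
          rw [hk4, Real.mul_rpow (by norm_num) (rad_pos k).le]
        have h4 : (0 : ℝ) < 4 ^ β := by positivity
        have h40 : ENNReal.ofReal (4 ^ β) ≠ 0 := by simpa using h4
        rw [this, ENNReal.ofReal_mul h4.le, ENNReal.mul_inv (Or.inl h40) (Or.inl (by simp)),
          ← mul_assoc, ENNReal.mul_inv_cancel h40 (by simp), one_mul]
        rw [ENNReal.inv_le_inv]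
        exact ENNReal.ofReal_le_ofReal (Real.rpow_le_rpow (rad_pos k).le hk1 hβ.le)
    _ = (2 ^ n * ENNReal.ofReal (4 ^ β)) *
        ((volume (ball (0 : EuclideanSpace ℝ (Fin n)) (rad (k + 1 + 1))))⁻¹ *
        (volume (ball (0 : EuclideanSpace ℝ (Fin n)) (rad (k + 1))) * rho β (k + 1 + 1))) := by
        rw [rad_succ (k + 1), vol_two _ hk, ENNReal.mul_inv (Or.inl (by simp)) (Or.inl (by simp))]
        calc _ = (2 ^ n * (2 ^ n)⁻¹ : ℝ≥0∞) *
              ((volume (ball (0 : EuclideanSpace ℝ (Fin n)) (rad (k + 1))))⁻¹ *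
                volume (ball (0 : EuclideanSpace ℝ (Fin n)) (rad (k + 1)))) *
                (ENNReal.ofReal (4 ^ β) * rho β (k + 1 + 1)) := by
              rw [ENNReal.mul_inv_cancel (by simp) (by simp), ENNReal.inv_mul_cancel hv0 hvt]; simp
          _ = _ := by ring
    _ ≤ _ := by gcongr

lemma tonelli {n : ℕ} (β : ℝ) (hβ : 0 < β) (σ u : Measure (EuclideanSpace ℝ (Fin n))) [SFinite σ]
    [SFinite u] (hat : ∀ x, σ {x} = 0) (h g : EuclideanSpace ℝ (Fin n) → ℝ≥0∞)
    (hh : Measurable h) (hg : Measurable g) :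
    ∫⁻ x, g x * ∫⁻ y, h y * ker β x y ∂σ ∂u ≤ (2 ^ n * ENNReal.ofReal (4 ^ β)) *
      ∫⁻ ξ, rho β ξ.1 * (∫⁻ y, (Rel n).indicator 1 (ξ, y) * h y ∂σ) *
        (∫⁻ x, (Rel n).indicator 1 (ξ, x) * g x ∂u) ∂(Msc n) := by
  set c : ℝ≥0∞ := 2 ^ n * ENNReal.ofReal (4 ^ β) with hc
  have hct : c ≠ ⊤ := ENNReal.mul_ne_top (by simp) (by simp)
  have hRm : Measurable ((Rel n).indicator
      (1 : (ℤ × EuclideanSpace ℝ (Fin n)) × EuclideanSpace ℝ (Fin n) → ℝ≥0∞)) :=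
    measurable_one.indicator (Rel_meas n)
  have hHm : Measurable fun ξ : ℤ × EuclideanSpace ℝ (Fin n) =>
      ∫⁻ y, (Rel n).indicator 1 (ξ, y) * h y ∂σ :=
    Measurable.lintegral_prod_right' (f := fun P => (Rel n).indicator 1 P * h P.2)
      (hRm.mul (hh.comp measurable_snd))
  have hin : ∀ x, ∫⁻ y, h y * ker β x y ∂σ ≤ c * ∫⁻ ξ, (Rel n).indicator 1 (ξ, x) *
      (rho β ξ.1 * ∫⁻ y, (Rel n).indicator 1 (ξ, y) * h y ∂σ) ∂(Msc n) := by
    intro x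
    have hae : ∀ᵐ y ∂σ, y ≠ x := by
      rw [ae_iff]; simpa using hat x
    calc ∫⁻ y, h y * ker β x y ∂σ ≤ ∫⁻ y, c * ∫⁻ ξ, h y * ((Rel n).indicator 1 (ξ, x) *
          ((Rel n).indicator 1 (ξ, y) * rho β ξ.1)) ∂(Msc n) ∂σ := by
          refine lintegral_mono_ae (hae.mono fun y hy => ?_)
          have hm1 : Measurable fun ξ : ℤ × EuclideanSpace ℝ (Fin n) =>
              (Rel n).indicator 1 (ξ, x) * ((Rel n).indicator 1 (ξ, y) * rho β ξ.1) :=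
            (ind_meas_left x).mul ((ind_meas_left y).mul (rho_meas β))
          rw [lintegral_const_mul _ hm1]
          calc h y * ker β x y ≤ h y * (c * ∫⁻ ξ, (Rel n).indicator 1 (ξ, x) *
              ((Rel n).indicator 1 (ξ, y) * rho β ξ.1) ∂(Msc n)) :=
                mul_le_mul_right (ker_le β hβ x y hy.symm) _
            _ = _ := by ring
      _ = c * ∫⁻ y, ∫⁻ ξ, h y * ((Rel n).indicator 1 (ξ, x) *
          ((Rel n).indicator 1 (ξ, y) * rho β ξ.1)) ∂(Msc n) ∂σ := lintegral_const_mul' _ _ hct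
      _ = c * ∫⁻ ξ, ∫⁻ y, h y * ((Rel n).indicator 1 (ξ, x) *
          ((Rel n).indicator 1 (ξ, y) * rho β ξ.1)) ∂σ ∂(Msc n) := by
          rw [lintegral_lintegral_swap]
          refine Measurable.aemeasurable ?_
          refine (hh.comp measurable_fst).mul (((ind_meas_left x).comp measurable_snd).mul
            ((hRm.comp measurable_swap).mul ((rho_meas β).comp measurable_snd)))
      _ = _ := by
          congr 1
          refine lintegral_congr fun ξ => ?_
          have hm : Measurable fun y => (Rel n).indicator 1 (ξ, y) * h y :=
            (hRm.comp measurable_prodMk_left).mul hh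
          rw [← mul_assoc, ← lintegral_const_mul _ hm]
          refine lintegral_congr fun y => ?_
          ring
  calc _ ≤ ∫⁻ x, c * ∫⁻ ξ, g x * ((Rel n).indicator 1 (ξ, x) *
      (rho β ξ.1 * ∫⁻ y, (Rel n).indicator 1 (ξ, y) * h y ∂σ)) ∂(Msc n) ∂u := by
        refine lintegral_mono fun x => ?_
        simp only
        have hm1 : Measurable fun ξ : ℤ × EuclideanSpace ℝ (Fin n) =>
            (Rel n).indicator 1 (ξ, x) *
              (rho β ξ.1 * ∫⁻ y, (Rel n).indicator 1 (ξ, y) * h y ∂σ) :=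
          (ind_meas_left x).mul ((rho_meas β).mul hHm)
        rw [lintegral_const_mul _ hm1]
        refine (mul_le_mul_right (hin x) (g x)).trans_eq ?_
        ring
    _ = c * ∫⁻ x, ∫⁻ ξ, g x * ((Rel n).indicator 1 (ξ, x) *
      (rho β ξ.1 * ∫⁻ y, (Rel n).indicator 1 (ξ, y) * h y ∂σ)) ∂(Msc n) ∂u :=
        lintegral_const_mul' _ _ hct
    _ = c * ∫⁻ ξ, ∫⁻ x, g x * ((Rel n).indicator 1 (ξ, x) *
      (rho β ξ.1 * ∫⁻ y, (Rel n).indicator 1 (ξ, y) * h y ∂σ)) ∂u ∂(Msc n) := by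
        rw [lintegral_lintegral_swap]
        refine Measurable.aemeasurable ?_
        exact (hg.comp measurable_fst).mul ((hRm.comp measurable_swap).mul
          (((rho_meas β).comp measurable_snd).mul (hHm.comp measurable_snd)))
    _ = _ := by
        congr 1
        refine lintegral_congr fun ξ => ?_
        have hm : Measurable fun y => (Rel n).indicator 1 (ξ, y) * g y :=
          (hRm.comp measurable_prodMk_left).mul hg
        rw [← lintegral_const_mul _ hm]
        refine lintegral_congr fun y => ?_
        ring

end MW
namespace MW

lemma embed_Dbl {n : ℕ} (σ : Measure (EuclideanSpace ℝ (Fin n))) [SFinite σ] (D η : ℝ≥0∞)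
    (hσ : Dbl σ D η) (p s : ℝ) (hp : 1 < p) (hps : p < s) :
    ∃ K : ℝ≥0∞, K ≠ ⊤ ∧ ∀ h : EuclideanSpace ℝ (Fin n) → ℝ≥0∞, Measurable h → (∀ y, h y ≠ ⊤) →
      (∫⁻ ξ, (σ (ball ξ.2 (rad ξ.1)) ^ (-(1 - 1 / p)) *
        ∫⁻ y, (Rel n).indicator 1 (ξ, y) * h y ∂σ) ^ s ∂(Msc n)) ^ (1 / s) ≤
      K * (∫⁻ y, h y ^ p ∂σ) ^ (1 / p) := by
  have hp0 : 0 < p := by linarith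
  have hs0 : 0 < s := by linarith
  have ha : 0 < s / p - 1 := by
    have : 1 < s / p := by rw [one_lt_div hp0]; exact hps
    linarith
  have hb : 0 < 1 - 1 / p := by
    have : 1 / p < 1 := by rw [div_lt_one hp0]; exact hp
    linarith
  obtain ⟨K, hK0, hKt, hK⟩ := hsum_Dbl σ D η hσ _ _ ha hb
  refine ⟨(2 ^ p * K) ^ (1 / s), ?_, ?_⟩
  · refine ENNReal.rpow_ne_top_of_nonneg (by positivity) (ENNReal.mul_ne_top ?_ hKt)
    exact ENNReal.rpow_ne_top_of_nonneg hp0.le (by simp)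
  intro h hm ht
  have := embed (Msc n) σ (Rel n) (Rel_meas n) p s hp hps (fun ξ => σ (ball ξ.2 (rad ξ.1)))
    (fun ξ => by rw [Rel_sec]) (fun ξ => (hσ.2.2 _ _ (rad_pos _)).1)
    (fun ξ => (hσ.2.2 _ _ (rad_pos _)).2.1) K hK0 hK h hm ht
  refine (ENNReal.rpow_le_rpow this (by positivity : 0 ≤ 1 / s)).trans_eq ?_
  rw [ENNReal.mul_rpow_of_nonneg _ _ (by positivity), ← ENNReal.rpow_mul]
  congr 2
  field_simp

lemma bilin {n : ℕ} (β : ℝ) (hβ : 0 < β) (σ u : Measure (EuclideanSpace ℝ (Fin n))) [SFinite σ]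
    [SFinite u] (hat : ∀ x, σ {x} = 0) (D η D' η' : ℝ≥0∞) (hσ : Dbl σ D η) (hu : Dbl u D' η')
    (p q : ℝ) (hp : 1 < p) (hpq : p < q) (C2 : ℝ≥0∞) (hC2 : C2 ≠ ⊤)
    (hrho : ∀ (z : EuclideanSpace ℝ (Fin n)) r, 0 < r → (ENNReal.ofReal (r ^ β))⁻¹ ≤
      C2 * (u (ball z r) ^ (-(1 / q)) * σ (ball z r) ^ (-(1 - 1 / p)))) :
    ∃ K : ℝ≥0∞, K ≠ ⊤ ∧ ∀ h g : EuclideanSpace ℝ (Fin n) → ℝ≥0∞, Measurable h → Measurable g →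
      (∀ y, h y ≠ ⊤) → (∀ y, g y ≠ ⊤) →
      ∫⁻ x, g x * ∫⁻ y, h y * ker β x y ∂σ ∂u ≤
        K * (∫⁻ y, h y ^ p ∂σ) ^ (1 / p) * (∫⁻ y, g y ^ (q / (q - 1)) ∂u) ^ (1 - 1 / q) := by
  have hp0 : 0 < p := by linarith
  have hq0 : 0 < q := by linarith
  set s : ℝ := (p + q) / 2 with hs
  have hps : p < s := by rw [hs]; linarith
  have hsq : s < q := by rw [hs]; linarith
  have hs1 : 1 < s := by linarith
  have hs0 : 0 < s := by linarith
  have hst : s.HolderConjugate (s / (s - 1)) := Real.HolderConjugate.conjExponent hs1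
  have hq1 : 1 < q / (q - 1) := by rw [one_lt_div (by linarith)]; linarith
  have hqt : q / (q - 1) < s / (s - 1) := by
    rw [div_lt_div_iff₀ (by linarith) (by linarith)]; nlinarith
  have he : 1 - 1 / (q / (q - 1)) = 1 / q := by field_simp; ring
  have he2 : 1 / (q / (q - 1)) = 1 - 1 / q := by linarith
  obtain ⟨K1, hK1, hE1⟩ := embed_Dbl σ D η hσ p s hp hps
  obtain ⟨K2, hK2, hE2⟩ := embed_Dbl u D' η' hu _ _ hq1 hqt
  rw [he, he2] at hE2
  set c : ℝ≥0∞ := 2 ^ n * ENNReal.ofReal (4 ^ β) with hc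
  have hct : c ≠ ⊤ := ENNReal.mul_ne_top (by simp) (by simp)
  refine ⟨c * C2 * K1 * K2, by simp [ENNReal.mul_eq_top, hct, hC2, hK1, hK2], ?_⟩
  intro h g hh hg hht hgt
  have hRm : Measurable ((Rel n).indicator
      (1 : (ℤ × EuclideanSpace ℝ (Fin n)) × EuclideanSpace ℝ (Fin n) → ℝ≥0∞)) :=
    measurable_one.indicator (Rel_meas n)
  have hHm : Measurable fun ξ : ℤ × EuclideanSpace ℝ (Fin n) =>
      ∫⁻ y, (Rel n).indicator 1 (ξ, y) * h y ∂σ :=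
    Measurable.lintegral_prod_right' (f := fun P => (Rel n).indicator 1 P * h P.2)
      (hRm.mul (hh.comp measurable_snd))
  have hGm : Measurable fun ξ : ℤ × EuclideanSpace ℝ (Fin n) =>
      ∫⁻ y, (Rel n).indicator 1 (ξ, y) * g y ∂u :=
    Measurable.lintegral_prod_right' (f := fun P => (Rel n).indicator 1 P * g P.2)
      (hRm.mul (hg.comp measurable_snd))
  set A : ℤ × EuclideanSpace ℝ (Fin n) → ℝ≥0∞ := fun ξ =>
    σ (ball ξ.2 (rad ξ.1)) ^ (-(1 - 1 / p)) * ∫⁻ y, (Rel n).indicator 1 (ξ, y) * h y ∂σ with hA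
  set B : ℤ × EuclideanSpace ℝ (Fin n) → ℝ≥0∞ := fun ξ =>
    u (ball ξ.2 (rad ξ.1)) ^ (-(1 / q)) * ∫⁻ y, (Rel n).indicator 1 (ξ, y) * g y ∂u with hB
  have hAm : Measurable A := ((v_meas σ).pow_const _).mul hHm
  have hBm : Measurable B := ((v_meas u).pow_const _).mul hGm
  calc _ ≤ c * ∫⁻ ξ, rho β ξ.1 * (∫⁻ y, (Rel n).indicator 1 (ξ, y) * h y ∂σ) *
        (∫⁻ x, (Rel n).indicator 1 (ξ, x) * g x ∂u) ∂(Msc n) := tonelli β hβ σ u hat h g hh hg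
    _ ≤ c * ∫⁻ ξ, C2 * (A * B) ξ ∂(Msc n) := by
        refine mul_le_mul_right (lintegral_mono fun ξ => ?_) _
        have := hrho ξ.2 _ (rad_pos ξ.1)
        change rho β ξ.1 ≤ _ at this
        calc _ ≤ (C2 * (u (ball ξ.2 (rad ξ.1)) ^ (-(1 / q)) *
                σ (ball ξ.2 (rad ξ.1)) ^ (-(1 - 1 / p)))) *
              (∫⁻ y, (Rel n).indicator 1 (ξ, y) * h y ∂σ) *
              (∫⁻ x, (Rel n).indicator 1 (ξ, x) * g x ∂u) := by gcongr
          _ = _ := by simp only [hA, hB, Pi.mul_apply]; ring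
    _ = c * (C2 * ∫⁻ ξ, (A * B) ξ ∂(Msc n)) := by rw [lintegral_const_mul' _ _ hC2]
    _ ≤ c * (C2 * ((∫⁻ ξ, A ξ ^ s ∂(Msc n)) ^ (1 / s) *
          (∫⁻ ξ, B ξ ^ (s / (s - 1)) ∂(Msc n)) ^ (1 / (s / (s - 1))))) := by
        gcongr
        exact ENNReal.lintegral_mul_le_Lp_mul_Lq (Msc n) hst hAm.aemeasurable hBm.aemeasurable
    _ ≤ c * (C2 * ((K1 * (∫⁻ y, h y ^ p ∂σ) ^ (1 / p)) *
          (K2 * (∫⁻ y, g y ^ (q / (q - 1)) ∂u) ^ (1 - 1 / q)))) := by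
        gcongr
        · exact hE1 h hh hht
        · exact hE2 g hg hgt
    _ = _ := by ring

lemma strong {n : ℕ} (β : ℝ) (hβ : 0 < β) (σ u : Measure (EuclideanSpace ℝ (Fin n))) [SFinite σ]
    [SFinite u] (hat : ∀ x, σ {x} = 0) (D η D' η' : ℝ≥0∞) (hσ : Dbl σ D η) (hu : Dbl u D' η')
    (p q : ℝ) (hp : 1 < p) (hpq : p < q) (C2 : ℝ≥0∞) (hC2 : C2 ≠ ⊤)
    (hrho : ∀ (z : EuclideanSpace ℝ (Fin n)) r, 0 < r → (ENNReal.ofReal (r ^ β))⁻¹ ≤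
      C2 * (u (ball z r) ^ (-(1 / q)) * σ (ball z r) ^ (-(1 - 1 / p)))) :
    ∃ K : ℝ≥0∞, K ≠ ⊤ ∧ ∀ h : EuclideanSpace ℝ (Fin n) → ℝ≥0∞, Measurable h →
      (∀ y, h y ≠ ⊤) →
      (∫⁻ x, (∫⁻ y, h y * ker β x y ∂σ) ^ q ∂u) ^ (1 / q) ≤
        K * (∫⁻ y, h y ^ p ∂σ) ^ (1 / p) := by
  obtain ⟨K, hK, hb⟩ := bilin β hβ σ u hat D η D' η' hσ hu p q hp hpq C2 hC2 hrho
  refine ⟨K, hK, fun h hh hht => ?_⟩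
  have hq0 : 0 < q := by linarith
  have hq1 : 0 < q - 1 := by linarith
  set F : EuclideanSpace ℝ (Fin n) → ℝ≥0∞ := fun x => ∫⁻ y, h y * ker β x y ∂σ with hF
  have hFm : Measurable F :=
    Measurable.lintegral_prod_right' (f := fun P => h P.2 * ker β P.1 P.2)
      ((hh.comp measurable_snd).mul (ker_meas β))
  set T := K * (∫⁻ y, h y ^ p ∂σ) ^ (1 / p) with hT
  -- truncations
  set G : ℕ → EuclideanSpace ℝ (Fin n) → ℝ≥0∞ := fun N =>
    (ball 0 (N : ℝ)).indicator (fun x => min (F x) N) with hG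
  have hGm : ∀ N, Measurable (G N) := fun N =>
    (hFm.min measurable_const).indicator measurableSet_ball
  have hGle : ∀ N x, G N x ≤ N := by
    intro N x
    simp only [hG]
    by_cases hx : x ∈ ball (0 : EuclideanSpace ℝ (Fin n)) (N : ℝ) <;> simp [hx]
  have hGF : ∀ N x, G N x ≤ F x := by
    intro N x
    simp only [hG]
    by_cases hx : x ∈ ball (0 : EuclideanSpace ℝ (Fin n)) (N : ℝ) <;> simp [hx]
  have hGt : ∀ N x, G N x ≠ ⊤ := fun N x => ne_top_of_le_ne_top (by simp) (hGle N x)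
  have hI : ∀ N, ∫⁻ x, G N x ^ q ∂u ≤ T ^ q := by
    intro N
    set I := ∫⁻ x, G N x ^ q ∂u with hIdef
    have hIt : I ≠ ⊤ := by
      have hle : I ≤ ∫⁻ x in ball 0 (N : ℝ), (N : ℝ≥0∞) ^ q ∂u := by
        rw [hIdef, ← lintegral_indicator measurableSet_ball]
        refine lintegral_mono fun x => ?_
        by_cases hx : x ∈ ball (0 : EuclideanSpace ℝ (Fin n)) (N : ℝ)
        · rw [indicator_of_mem hx]
          exact ENNReal.rpow_le_rpow (hGle N x) hq0.le
        · simp [hG, hx, hq0]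
      refine ne_top_of_le_ne_top ?_ hle
      rw [setLIntegral_const]
      refine ENNReal.mul_ne_top (ENNReal.rpow_ne_top_of_nonneg hq0.le (by simp)) ?_
      rcases Nat.eq_zero_or_pos N with h0 | h0
      · subst h0; simp
      · exact (hu.2.2 0 (N : ℝ) (by exact_mod_cast h0)).2.1
    rcases eq_or_ne I 0 with hI0 | hI0
    · rw [hI0]; exact zero_le
    have h1 := hb h (fun x => G N x ^ (q - 1)) hh ((hGm N).pow_const _) hht
      (fun y => ENNReal.rpow_ne_top_of_nonneg hq1.le (hGt N y))
    have h2 : I ≤ ∫⁻ x, G N x ^ (q - 1) * F x ∂u := by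
      refine lintegral_mono fun x => ?_
      calc G N x ^ q = G N x ^ (q - 1) * G N x ^ (1 : ℝ) := by
            rw [← ENNReal.rpow_add_of_nonneg _ _ hq1.le zero_le_one]; congr 1; ring
        _ ≤ _ := by rw [ENNReal.rpow_one]; exact mul_le_mul_right (hGF N x) _
    have h3 : ∫⁻ y, (G N y ^ (q - 1)) ^ (q / (q - 1)) ∂u = I := by
      refine lintegral_congr fun y => ?_
      rw [← ENNReal.rpow_mul]; congr 1; field_simp
    rw [h3] at h1
    have h4 : I ≤ T * I ^ (1 - 1 / q) := h2.trans h1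
    have h5 : I = I ^ (1 / q) * I ^ (1 - 1 / q) := by
      rw [← ENNReal.rpow_add _ _ hI0 hIt]; simp
    have hc0 : I ^ (1 - 1 / q) ≠ 0 := by
      rw [Ne, ENNReal.rpow_eq_zero_iff]; simp [hI0, hIt]
    have hct : I ^ (1 - 1 / q) ≠ ⊤ := by
      refine ENNReal.rpow_ne_top_of_nonneg ?_ hIt
      have : 1 / q ≤ 1 := by rw [div_le_one hq0]; linarith
      linarith
    have h6 : I ^ (1 / q) ≤ T := by
      have h7 : I ^ (1 / q) * I ^ (1 - 1 / q) ≤ T * I ^ (1 - 1 / q) := by rw [← h5]; exact h4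
      exact (ENNReal.mul_le_mul_iff_left hc0 hct).1 h7
    calc I = (I ^ (1 / q)) ^ q := by rw [← ENNReal.rpow_mul]; simp [hq0.ne']
      _ ≤ _ := ENNReal.rpow_le_rpow h6 hq0.le
  have hmono : Monotone fun N x => G N x ^ q := by
    intro N N' hN x
    refine ENNReal.rpow_le_rpow ?_ hq0.le
    simp only [hG]
    have hNR : (N : ℝ) ≤ N' := by exact_mod_cast hN
    have hNE : (N : ℝ≥0∞) ≤ N' := by exact_mod_cast hN
    by_cases hx : x ∈ ball (0 : EuclideanSpace ℝ (Fin n)) (N : ℝ)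
    · rw [indicator_of_mem hx, indicator_of_mem (ball_subset_ball hNR hx)]
      exact min_le_min le_rfl hNE
    · rw [indicator_of_notMem hx]; exact zero_le
  have hsup : ∀ x, F x ^ q ≤ ⨆ N, G N x ^ q := by
    intro x
    have hle : F x ≤ ⨆ N, G N x := by
      refine le_of_forall_lt fun c hc => ?_
      have hct : c ≠ ⊤ := ne_top_of_lt hc
      obtain ⟨N1, hN1⟩ := ENNReal.exists_nat_gt hct
      obtain ⟨N2, hN2⟩ := exists_nat_gt ‖x‖
      refine lt_of_lt_of_le ?_ (le_iSup (fun N => G N x) (max N1 N2))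
      have hx : x ∈ ball (0 : EuclideanSpace ℝ (Fin n)) ((max N1 N2 : ℕ) : ℝ) := by
        rw [mem_ball_zero_iff]
        exact hN2.trans_le (by exact_mod_cast le_max_right _ _)
      simp only [hG]
      rw [indicator_of_mem hx]
      exact lt_min hc (hN1.trans_le (by exact_mod_cast le_max_left _ _))
    calc F x ^ q ≤ (⨆ N, G N x) ^ q := ENNReal.rpow_le_rpow hle hq0.le
      _ = _ := (ENNReal.orderIsoRpow q hq0).map_iSup _
  calc _ ≤ (T ^ q) ^ (1 / q) := by
        refine ENNReal.rpow_le_rpow ?_ (by positivity)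
        calc _ ≤ ∫⁻ x, ⨆ N, G N x ^ q ∂u := lintegral_mono hsup
          _ = ⨆ N, ∫⁻ x, G N x ^ q ∂u :=
              lintegral_iSup (fun N => (hGm N).pow_const _) hmono
          _ ≤ _ := iSup_le hI
    _ = T := by rw [← ENNReal.rpow_mul]; simp [hq0.ne']

end MW
namespace MW

lemma h1_gen {X : Type*} [MeasurableSpace X] (μ : Measure X) (φ ψ : X → ℝ≥0∞) (hφ : Measurable φ)
    (hψ : Measurable ψ) (a b : ℝ) (ha : 0 < a) (hb : 0 < b)
    (h1 : ∀ᵐ x ∂μ, φ x ^ a * ψ x ^ b = 1) (E : Set X) (hE : MeasurableSet E) :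
    μ E ^ (a + b) ≤ (μ.withDensity φ) E ^ a * (μ.withDensity ψ) E ^ b := by
  have hab : 0 < a + b := by linarith
  have h2 : μ E ≤ (∫⁻ x in E, φ x ∂μ) ^ (a / (a + b)) * (∫⁻ x in E, ψ x ∂μ) ^ (b / (a + b)) := by
    calc μ E = ∫⁻ x in E, 1 ∂μ := by simp
      _ = ∫⁻ x in E, φ x ^ (a / (a + b)) * ψ x ^ (b / (a + b)) ∂μ := by
          refine lintegral_congr_ae (ae_restrict_of_ae (h1.mono fun x hx => ?_))
          simp only
          rw [div_eq_mul_inv, div_eq_mul_inv, ENNReal.rpow_mul, ENNReal.rpow_mul,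
            ← ENNReal.mul_rpow_of_nonneg _ _ (by positivity), hx, ENNReal.one_rpow]
      _ ≤ _ := ENNReal.lintegral_mul_norm_pow_le hφ.aemeasurable hψ.aemeasurable
          (by positivity) (by positivity) (by field_simp)
  rw [withDensity_apply _ hE, withDensity_apply _ hE]
  refine (ENNReal.rpow_le_rpow h2 hab.le).trans_eq ?_
  rw [ENNReal.mul_rpow_of_nonneg _ _ hab.le, ← ENNReal.rpow_mul, ← ENNReal.rpow_mul]
  congr 2 <;> field_simp

lemma Dbl_of {n : ℕ} (hn : 0 < n) (u σ : Measure (EuclideanSpace ℝ (Fin n))) (a b : ℝ)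
    (ha : 0 < a) (hb : 0 < b) (C : ℝ≥0∞) (hC : C ≠ ⊤)
    (H1 : ∀ E, MeasurableSet E → volume E ^ (a + b) ≤ u E ^ a * σ E ^ b)
    (H0 : ∀ (z : EuclideanSpace ℝ (Fin n)) r, 0 < r → u (ball z r) ≠ 0 ∧ u (ball z r) ≠ ⊤ ∧
      σ (ball z r) ≠ 0 ∧ σ (ball z r) ≠ ⊤)
    (H2 : ∀ (z : EuclideanSpace ℝ (Fin n)) r, 0 < r → u (ball z r) ^ a * σ (ball z r) ^ b ≤
      C * volume (ball z r) ^ (a + b)) :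
    ∃ D η, Dbl u D η := by
  have hab : 0 < a + b := by linarith
  set c : ℝ≥0∞ := C * ((2 : ℝ≥0∞) ^ n) ^ (a + b) with hc
  have hct : c ≠ ⊤ := ENNReal.mul_ne_top hC (ENNReal.rpow_ne_top_of_nonneg hab.le (by simp))
  set D : ℝ≥0∞ := c ^ (1 / a) with hD
  have hDt : D ≠ ⊤ := ENNReal.rpow_ne_top_of_nonneg (by positivity) hct
  have key : ∀ (z : EuclideanSpace ℝ (Fin n)) r E, 0 < r → MeasurableSet E → E ⊆ ball z r →
      volume (ball z r) ≤ 2 ^ n * volume E → u (ball z r) ≤ D * u E := by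
    intro z r E hr hE hsub hvol
    obtain ⟨hu0, hut, hs0, hst⟩ := H0 z r hr
    have h3 : u (ball z r) ^ a * σ (ball z r) ^ b ≤ (c * u E ^ a) * σ (ball z r) ^ b := by
      calc _ ≤ C * volume (ball z r) ^ (a + b) := H2 z r hr
        _ ≤ C * (2 ^ n * volume E) ^ (a + b) := by gcongr
        _ = c * volume E ^ (a + b) := by
            rw [ENNReal.mul_rpow_of_nonneg _ _ hab.le, ← mul_assoc]
        _ ≤ c * (u E ^ a * σ E ^ b) := by gcongr; exact H1 E hE
        _ ≤ c * (u E ^ a * σ (ball z r) ^ b) := by gcongr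
        _ = _ := by ring
    have h4 : u (ball z r) ^ a ≤ c * u E ^ a := by
      refine (ENNReal.mul_le_mul_iff_left ?_ ?_).1 h3
      · rw [Ne, ENNReal.rpow_eq_zero_iff]; simp [hs0, hst]
      · exact ENNReal.rpow_ne_top_of_nonneg hb.le hst
    calc u (ball z r) = (u (ball z r) ^ a) ^ (1 / a) := by rw [← ENNReal.rpow_mul]; simp [ha.ne']
      _ ≤ (c * u E ^ a) ^ (1 / a) := ENNReal.rpow_le_rpow h4 (by positivity)
      _ = D * u E := by
        rw [ENNReal.mul_rpow_of_nonneg _ _ (by positivity), ← ENNReal.rpow_mul (u E)]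
        simp [ha.ne', hD]
  refine ⟨D, 1 - D⁻¹, hDt, ?_, ?_⟩
  · exact ENNReal.sub_lt_self (by simp) (by simp) (by simp [hDt])
  intro y r hr
  have hr2 : 0 < 2 * r := by linarith
  obtain ⟨hu0, hut, -, -⟩ := H0 y r hr
  obtain ⟨hu0', hut', -, -⟩ := H0 y (2 * r) hr2
  have hsub : ball y r ⊆ ball y (2 * r) := ball_subset_ball (by linarith)
  refine ⟨hu0, hut, key y (2 * r) _ hr2 measurableSet_ball hsub (vol_two y hr).le, ?_⟩
  have hE : u (ball y (2 * r)) ≤ D * u (ball y (2 * r) \ ball y r) := by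
    refine key y (2 * r) _ hr2 (measurableSet_ball.diff measurableSet_ball) diff_subset ?_
    rw [measure_sdiff hsub measurableSet_ball.nullMeasurableSet (vol_ne_top y r)]
    rw [vol_two y hr]
    gcongr
    refine ENNReal.le_sub_of_add_le_left (vol_ne_top y r) ?_
    calc volume (ball y r) + volume (ball y r) = 2 ^ 1 * volume (ball y r) := by ring
      _ ≤ 2 ^ n * volume (ball y r) := by
        gcongr
        · norm_num
        · exact hn
  have hsum : u (ball y r) + u (ball y (2 * r) \ ball y r) = u (ball y (2 * r)) := by
    rw [add_comm]; rw [measure_sdiff hsub measurableSet_ball.nullMeasurableSet hut]; exact tsub_add_cancel_of_le (measure_mono hsub)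
  have hD0 : D ≠ 0 := by
    rintro h0; rw [h0, zero_mul] at hE; exact hu0' (by simpa using hE)
  have hE2 : D⁻¹ * u (ball y (2 * r)) ≤ u (ball y (2 * r) \ ball y r) := by
    rw [mul_comm, ← div_eq_mul_inv]
    exact ENNReal.div_le_of_le_mul' hE
  rw [ENNReal.sub_mul (fun _ _ => hut'), one_mul]
  refine ENNReal.le_sub_of_add_le_right (ENNReal.mul_ne_top (by simp [hD0]) hut') ?_
  calc _ ≤ u (ball y r) + u (ball y (2 * r) \ ball y r) := by gcongr
    _ = _ := hsum

/-- the measure `w^e dx` -/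
noncomputable def wm {n : ℕ} (w : EuclideanSpace ℝ (Fin n) → ℝ) (e : ℝ) :
    Measure (EuclideanSpace ℝ (Fin n)) :=
  volume.withDensity fun x => ENNReal.ofReal (w x ^ e)

noncomputable instance {n : ℕ} (w : EuclideanSpace ℝ (Fin n) → ℝ) (e : ℝ) : SFinite (wm w e) := by
  unfold wm; infer_instance

lemma wm_ball_ne_zero {n : ℕ} (w : EuclideanSpace ℝ (Fin n) → ℝ) (hwm : Measurable w)
    (hw : ∀ᵐ x ∂volume, 0 < w x) (e : ℝ) (z : EuclideanSpace ℝ (Fin n)) {r : ℝ} (hr : 0 < r) :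
    wm w e (ball z r) ≠ 0 := by
  intro h0
  unfold wm at h0
  rw [withDensity_apply _ measurableSet_ball,
    lintegral_eq_zero_iff (hwm.pow_const e).ennreal_ofReal] at h0
  have h1 : ∀ᵐ x ∂(volume.restrict (ball z r)), False := by
    filter_upwards [h0, ae_restrict_of_ae hw] with x hx hx2
    have := Real.rpow_pos_of_pos hx2 e
    simp only [Pi.zero_apply, ENNReal.ofReal_eq_zero] at hx
    linarith
  rw [ae_iff] at h1
  simp at h1
  exact vol_ne_zero z hr h1

lemma vol_scale {n : ℕ} (z : EuclideanSpace ℝ (Fin n)) {r : ℝ} (hr : 0 < r) (θ β : ℝ) (hθ : 0 ≤ θ)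
    (hβ : n * θ = β) :
    volume (ball z r) ^ θ =
      volume (ball (0 : EuclideanSpace ℝ (Fin n)) 1) ^ θ * ENNReal.ofReal (r ^ β) := by
  rw [Measure.addHaar_ball_of_pos volume z hr, ENNReal.mul_rpow_of_nonneg _ _ hθ, mul_comm]
  congr 1
  rw [ENNReal.ofReal_rpow_of_nonneg (by positivity) hθ]
  congr 1
  rw [finrank_euclideanSpace_fin, ← Real.rpow_natCast, ← Real.rpow_mul hr.le, hβ]

lemma apq {n : ℕ} (p q p' : ℝ) (hq : 0 < q) (hp' : 0 < p') (w : EuclideanSpace ℝ (Fin n) → ℝ)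
    (hwm : Measurable w) (hw : ∀ᵐ x ∂volume, 0 < w x) (hApq : MuckApq p q p' w) :
    ∃ C : ℝ≥0∞, C ≠ ⊤ ∧ ∀ (z : EuclideanSpace ℝ (Fin n)) r, 0 < r →
      (wm w q (ball z r) ≠ 0 ∧ wm w q (ball z r) ≠ ⊤ ∧
        wm w (-p') (ball z r) ≠ 0 ∧ wm w (-p') (ball z r) ≠ ⊤) ∧
      wm w q (ball z r) ^ (1 / q) * wm w (-p') (ball z r) ^ (1 / p') ≤
        C * volume (ball z r) ^ (1 / q + 1 / p') := by
  obtain ⟨C, hC, hA⟩ := hApq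
  refine ⟨ENNReal.ofReal C, by simp, fun z r hr => ?_⟩
  have hA := hA z r hr
  have e1 : ∫⁻ x in ball z r, ENNReal.ofReal (w x ^ q) = wm w q (ball z r) := by
    unfold wm; rw [withDensity_apply _ measurableSet_ball]
  have e2 : ∫⁻ x in ball z r, ENNReal.ofReal (w x ^ (-p')) = wm w (-p') (ball z r) := by
    unfold wm; rw [withDensity_apply _ measurableSet_ball]
  rw [e1, e2] at hA
  have hu0 := wm_ball_ne_zero w hwm hw q z hr
  have hs0 := wm_ball_ne_zero w hwm hw (-p') z hr
  have hv0 := vol_ne_zero z hr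
  have hvt := vol_ne_top z r
  have hq1 : 0 < 1 / q := by positivity
  have hp1 : 0 < 1 / p' := by positivity
  generalize wm w q (ball z r) = U at *
  generalize wm w (-p') (ball z r) = S at *
  generalize volume (ball z r) = V at *
  rw [ENNReal.mul_rpow_of_nonneg _ _ hq1.le, ENNReal.mul_rpow_of_nonneg _ _ hp1.le] at hA
  have i1 : V⁻¹ ^ (1 / q) ≠ 0 := by simp [ENNReal.rpow_eq_zero_iff, hvt, hv0]
  have i2 : V⁻¹ ^ (1 / p') ≠ 0 := by simp [ENNReal.rpow_eq_zero_iff, hvt, hv0]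
  have i3 : U ^ (1 / q) ≠ 0 := by
    rw [Ne, ENNReal.rpow_eq_zero_iff]; push Not
    exact ⟨fun h => absurd h hu0, fun _ => hq1.le⟩
  have i4 : S ^ (1 / p') ≠ 0 := by
    rw [Ne, ENNReal.rpow_eq_zero_iff]; push Not
    exact ⟨fun h => absurd h hs0, fun _ => hp1.le⟩
  have hlt := hA.trans_lt ENNReal.ofReal_lt_top
  refine ⟨⟨hu0, ?_, hs0, ?_⟩, ?_⟩
  · rintro rfl
    rw [ENNReal.top_rpow_of_pos hq1, ENNReal.mul_top i1,
      ENNReal.top_mul (mul_ne_zero i2 i4)] at hlt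
    exact lt_irrefl _ hlt
  · rintro rfl
    rw [ENNReal.top_rpow_of_pos hp1, ENNReal.mul_top i2,
      ENNReal.mul_top (mul_ne_zero i1 i3)] at hlt
    exact lt_irrefl _ hlt
  · calc U ^ (1 / q) * S ^ (1 / p') =
        (V⁻¹ ^ (1 / q) * U ^ (1 / q) * (V⁻¹ ^ (1 / p') * S ^ (1 / p'))) * V ^ (1 / q + 1 / p') := by
          rw [ENNReal.rpow_add _ _ hv0 hvt, ENNReal.inv_rpow, ENNReal.inv_rpow]
          have j1 : (V ^ (1 / q))⁻¹ * V ^ (1 / q) = 1 :=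
            ENNReal.inv_mul_cancel (by simp [ENNReal.rpow_eq_zero_iff, hvt, hv0])
              (ENNReal.rpow_ne_top_of_nonneg hq1.le hvt)
          have j2 : (V ^ (1 / p'))⁻¹ * V ^ (1 / p') = 1 :=
            ENNReal.inv_mul_cancel (by simp [ENNReal.rpow_eq_zero_iff, hvt, hv0])
              (ENNReal.rpow_ne_top_of_nonneg hp1.le hvt)
          calc _ = ((V ^ (1 / q))⁻¹ * V ^ (1 / q)) * ((V ^ (1 / p'))⁻¹ * V ^ (1 / p')) *
                (U ^ (1 / q) * S ^ (1 / p')) := by rw [j1, j2]; simp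
            _ = _ := by ring
      _ ≤ _ := by gcongr

lemma wm_facts {n : ℕ} (α p q p' : ℝ) (hα : 0 < α) (hαn : α < n)
    (hp : 1 < p) (hq0 : 0 < q) (hpq : p < q) (hq : 1 / q = 1 / p - α / n)
    (hp0' : 0 < p') (hp' : 1 / p + 1 / p' = 1)
    (w : EuclideanSpace ℝ (Fin n) → ℝ) (hwm : Measurable w)
    (hw : ∀ᵐ x ∂volume, 0 < w x) (hApq : MuckApq p q p' w) :
    ∃ D η D' η' C : ℝ≥0∞, Dbl (wm w (-p')) D η ∧ Dbl (wm w q) D' η' ∧ C ≠ ⊤ ∧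
      ∀ (z : EuclideanSpace ℝ (Fin n)) r, 0 < r → (ENNReal.ofReal (r ^ ((n : ℝ) - α)))⁻¹ ≤
      C * (wm w q (ball z r) ^ (-(1 / q)) * wm w (-p') (ball z r) ^ (-(1 - 1 / p))) := by
  have hn : 0 < n := by
    have : (0 : ℝ) < n := by linarith
    exact_mod_cast this
  have hnR : (0 : ℝ) < n := by exact_mod_cast hn
  obtain ⟨C, hC, hall⟩ := apq p q p' hq0 hp0' w hwm hw hApq
  have hq1 : 0 < 1 / q := by positivity
  have hp1 : 0 < 1 / p' := by positivity
  have hone : ∀ᵐ x ∂volume, ENNReal.ofReal (w x ^ q) ^ (1 / q) *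
      ENNReal.ofReal (w x ^ (-p')) ^ (1 / p') = 1 := by
    filter_upwards [hw] with x hx
    rw [ENNReal.ofReal_rpow_of_pos (by positivity), ENNReal.ofReal_rpow_of_pos (by positivity),
      ← ENNReal.ofReal_mul (by positivity), ← Real.rpow_mul hx.le, ← Real.rpow_mul hx.le,
      ← Real.rpow_add hx]
    have : q * (1 / q) + -p' * (1 / p') = 0 := by field_simp; ring
    rw [this]; simp
  have H1 : ∀ E, MeasurableSet E → volume E ^ (1 / q + 1 / p') ≤
      wm w q E ^ (1 / q) * wm w (-p') E ^ (1 / p') := fun E hE =>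
    h1_gen volume _ _ (hwm.pow_const q).ennreal_ofReal (hwm.pow_const (-p')).ennreal_ofReal _ _
      hq1 hp1 hone E hE
  obtain ⟨D', η', hu⟩ := Dbl_of hn (wm w q) (wm w (-p')) (1 / q) (1 / p') hq1 hp1 C hC H1
    (fun z r hr => (hall z r hr).1) (fun z r hr => (hall z r hr).2)
  obtain ⟨D, η, hσ⟩ := Dbl_of hn (wm w (-p')) (wm w q) (1 / p') (1 / q) hp1 hq1 C hC
    (fun E hE => by rw [add_comm, mul_comm]; exact H1 E hE)
    (fun z r hr => by
      obtain ⟨h1, h2, h3, h4⟩ := (hall z r hr).1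
      exact ⟨h3, h4, h1, h2⟩)
    (fun z r hr => by
      rw [add_comm, mul_comm]; exact (hall z r hr).2)
  set c := volume (ball (0 : EuclideanSpace ℝ (Fin n)) 1) ^ (1 / q + 1 / p') with hc
  have hct : c ≠ ⊤ := ENNReal.rpow_ne_top_of_nonneg (by positivity) (vol_ne_top _ _)
  refine ⟨D, η, D', η', C * c, hσ, hu, ENNReal.mul_ne_top hC hct, ?_⟩
  intro z r hr
  obtain ⟨⟨hu0, hut, hs0, hst⟩, h2⟩ := hall z r hr
  have hβ : (n : ℝ) * (1 / q + 1 / p') = n - α := by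
    have : 1 / p' = 1 - 1 / p := by linarith
    rw [this, hq]; field_simp; ring
  rw [vol_scale z hr _ _ (by positivity) hβ, ← hc, ← mul_assoc] at h2
  have e1 : 1 - 1 / p = 1 / p' := by linarith
  rw [e1, ENNReal.rpow_neg, ENNReal.rpow_neg]
  have i1 : wm w q (ball z r) ^ (1 / q) ≠ 0 := by simp [ENNReal.rpow_eq_zero_iff, hu0, hut]
  have i2 : wm w q (ball z r) ^ (1 / q) ≠ ⊤ := ENNReal.rpow_ne_top_of_nonneg hq1.le hut
  have i3 : wm w (-p') (ball z r) ^ (1 / p') ≠ 0 := by simp [ENNReal.rpow_eq_zero_iff, hs0, hst]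
  have i4 : wm w (-p') (ball z r) ^ (1 / p') ≠ ⊤ := ENNReal.rpow_ne_top_of_nonneg hp1.le hst
  rw [← ENNReal.mul_inv (Or.inl i1) (Or.inl i2), ← div_eq_mul_inv]
  rw [ENNReal.le_div_iff_mul_le (Or.inl (mul_ne_zero i1 i3)) (Or.inl (ENNReal.mul_ne_top i2 i4))]
  rw [mul_comm, ← div_eq_mul_inv]
  exact ENNReal.div_le_of_le_mul h2

end MW
namespace MW

lemma wSet_eq {n : ℕ} (w : EuclideanSpace ℝ (Fin n) → ℝ) (e : ℝ)
    (a : EuclideanSpace ℝ (Fin n)) (r : ℝ) :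
    wSet (fun x => w x ^ e) (ball a r) = wm w e (ball a r) := by
  unfold wSet wm; rw [withDensity_apply _ measurableSet_ball]

lemma wm_atom {n : ℕ} (hn : 0 < n) (w : EuclideanSpace ℝ (Fin n) → ℝ) (e : ℝ)
    (x : EuclideanSpace ℝ (Fin n)) : wm w e {x} = 0 := by
  haveI : Nonempty (Fin n) := ⟨⟨0, hn⟩⟩
  exact withDensity_absolutelyContinuous _ _ (measure_singleton x)

lemma ker_meas_right {n : ℕ} (β : ℝ) (x : EuclideanSpace ℝ (Fin n)) :
    Measurable (fun y : EuclideanSpace ℝ (Fin n) => ker β x y) := by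
  unfold ker
  have : Measurable (fun y : EuclideanSpace ℝ (Fin n) => dist x y) := by fun_prop
  exact ((this.pow_const β).ennreal_ofReal).inv

lemma near {n : ℕ} (β : ℝ) (p q p' : ℝ) (hp : 1 < p) (hp' : 1 / p + 1 / p' = 1) (hp0' : 0 < p')
    (w : EuclideanSpace ℝ (Fin n) → ℝ) (hwm : Measurable w)
    (hw : ∀ᵐ x ∂volume, 0 < w x) (K : ℝ≥0∞)
    (hK : ∀ h : EuclideanSpace ℝ (Fin n) → ℝ≥0∞, Measurable h →
      (∀ y, h y ≠ ⊤) →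
      (∫⁻ x, (∫⁻ y, h y * ker β x y ∂(wm w (-p'))) ^ q ∂(wm w q)) ^ (1 / q) ≤
        K * (∫⁻ y, h y ^ p ∂(wm w (-p'))) ^ (1 / p))
    (f : EuclideanSpace ℝ (Fin n) → ℝ) (hf : Measurable f) (Ω : Set (EuclideanSpace ℝ (Fin n)))
    (hΩ : MeasurableSet Ω) :
    (∫⁻ x, (∫⁻ y in Ω, ENNReal.ofReal |f y| * ker β x y) ^ q ∂(wm w q)) ^ (1 / q) ≤
      K * wLp p (fun x => w x ^ p) f Ω := by
  have hp0 : 0 < p := by linarith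
  have hem : Measurable fun y => ENNReal.ofReal |f y| :=
    (continuous_abs.measurable.comp hf).ennreal_ofReal
  have hpm : ∀ e : ℝ, Measurable fun y => ENNReal.ofReal (w y ^ e) := fun e =>
    (hwm.pow_const e).ennreal_ofReal
  set h : EuclideanSpace ℝ (Fin n) → ℝ≥0∞ :=
    Ω.indicator fun y => ENNReal.ofReal |f y| * ENNReal.ofReal (w y ^ p') with hh
  have hhm : Measurable h := by
    rw [hh]; exact Measurable.indicator (Measurable.mul hem (hpm p')) hΩ
  have hht : ∀ y, h y ≠ ⊤ := by
    intro y
    simp only [hh]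
    by_cases hy : y ∈ Ω
    · rw [indicator_of_mem hy]; exact ENNReal.mul_ne_top (by simp) (by simp)
    · rw [indicator_of_notMem hy]; simp
  have key := hK h hhm hht
  have e1 : ∀ x, ∫⁻ y, h y * ker β x y ∂(wm w (-p')) =
      ∫⁻ y in Ω, ENNReal.ofReal |f y| * ker β x y := by
    intro x
    have hkm : Measurable fun y => ker β x y := ker_meas_right β x
    have hm2 : Measurable fun y => h y * ker β x y := hhm.mul hkm
    unfold wm
    rw [lintegral_withDensity_eq_lintegral_mul _ (hpm _) hm2, ← lintegral_indicator hΩ]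
    refine lintegral_congr_ae (hw.mono fun y hy => ?_)
    simp only [Pi.mul_apply, hh]
    by_cases hyΩ : y ∈ Ω
    · rw [indicator_of_mem hyΩ, indicator_of_mem hyΩ]
      have : ENNReal.ofReal (w y ^ (-p')) * ENNReal.ofReal (w y ^ p') = 1 := by
        rw [← ENNReal.ofReal_mul (by positivity), ← Real.rpow_add hy]; simp
      calc _ = (ENNReal.ofReal (w y ^ (-p')) * ENNReal.ofReal (w y ^ p')) *
            (ENNReal.ofReal |f y| * ker β x y) := by ring
        _ = _ := by rw [this, one_mul]
    · rw [indicator_of_notMem hyΩ, indicator_of_notMem hyΩ]; simp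
  have e2 : ∫⁻ y, h y ^ p ∂(wm w (-p')) =
      ∫⁻ y in Ω, ENNReal.ofReal |f y| ^ p * ENNReal.ofReal (w y ^ p) := by
    unfold wm
    rw [lintegral_withDensity_eq_lintegral_mul _ (hpm _) (hhm.pow_const p),
      ← lintegral_indicator hΩ]
    refine lintegral_congr_ae (hw.mono fun y hy => ?_)
    simp only [Pi.mul_apply, hh]
    by_cases hyΩ : y ∈ Ω
    · rw [indicator_of_mem hyΩ, indicator_of_mem hyΩ]
      have : ENNReal.ofReal (w y ^ (-p')) * ENNReal.ofReal (w y ^ p') ^ p =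
          ENNReal.ofReal (w y ^ p) := by
        rw [ENNReal.ofReal_rpow_of_pos (by positivity), ← ENNReal.ofReal_mul (by positivity),
          ← Real.rpow_mul hy.le, ← Real.rpow_add hy]
        congr 2
        field_simp at hp'
        linarith
      rw [ENNReal.mul_rpow_of_nonneg _ _ hp0.le]
      calc _ = (ENNReal.ofReal (w y ^ (-p')) * ENNReal.ofReal (w y ^ p') ^ p) *
            (ENNReal.ofReal |f y| ^ p) := by ring
        _ = _ := by rw [this, mul_comm]
    · rw [indicator_of_notMem hyΩ, indicator_of_notMem hyΩ]; simp [hp0]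
  simp only [e1, e2] at key
  exact key

lemma hol {n : ℕ} (p p' : ℝ) (hp : 1 < p) (hp' : 1 / p + 1 / p' = 1) (hp0' : 0 < p')
    (w : EuclideanSpace ℝ (Fin n) → ℝ) (hwm : Measurable w)
    (hw : ∀ᵐ x ∂volume, 0 < w x)
    (f : EuclideanSpace ℝ (Fin n) → ℝ) (hf : Measurable f) (Ω : Set (EuclideanSpace ℝ (Fin n)))
    (hΩ : MeasurableSet Ω) :
    ∫⁻ y in Ω, ENNReal.ofReal |f y| ≤
      wLp p (fun x => w x ^ p) f Ω * wm w (-p') Ω ^ (1 - 1 / p) := by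
  have hp0 : 0 < p := by linarith
  have hem : Measurable fun y => ENNReal.ofReal |f y| :=
    (continuous_abs.measurable.comp hf).ennreal_ofReal
  have hpm : ∀ e : ℝ, Measurable fun y => ENNReal.ofReal (w y ^ e) := fun e =>
    (hwm.pow_const e).ennreal_ofReal
  have e1 : 1 - 1 / p = 1 / p' := by linarith
  unfold wLp wm
  rw [withDensity_apply _ hΩ, e1]
  calc ∫⁻ y in Ω, ENNReal.ofReal |f y| = ∫⁻ y in Ω,
        (ENNReal.ofReal |f y| ^ p * ENNReal.ofReal (w y ^ p)) ^ (1 / p) *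
          ENNReal.ofReal (w y ^ (-p')) ^ (1 / p') := by
        refine lintegral_congr_ae (ae_restrict_of_ae (hw.mono fun y hy => ?_))
        simp only
        rw [ENNReal.mul_rpow_of_nonneg _ _ (by positivity), ← ENNReal.rpow_mul, mul_assoc]
        have : ENNReal.ofReal (w y ^ p) ^ (1 / p) * ENNReal.ofReal (w y ^ (-p')) ^ (1 / p') = 1 := by
          rw [ENNReal.ofReal_rpow_of_pos (by positivity), ENNReal.ofReal_rpow_of_pos (by positivity),
            ← ENNReal.ofReal_mul (by positivity), ← Real.rpow_mul hy.le, ← Real.rpow_mul hy.le,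
            ← Real.rpow_add hy]
          have : p * (1 / p) + -p' * (1 / p') = 0 := by field_simp; ring
          rw [this]; simp
        rw [this]; simp [hp0.ne']
    _ ≤ _ := ENNReal.lintegral_mul_norm_pow_le ((hem.pow_const p).mul (hpm p)).aemeasurable
          (hpm _).aemeasurable (by positivity) (by positivity) hp'

lemma wLp_mono {n : ℕ} (p : ℝ) (hp : 0 < p) (w f : EuclideanSpace ℝ (Fin n) → ℝ)
    {A B : Set (EuclideanSpace ℝ (Fin n))} (h : A ⊆ B) : wLp p w f A ≤ wLp p w f B := by
  unfold wLp
  exact ENNReal.rpow_le_rpow (lintegral_mono_set h) (by positivity)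

/-- radii `2^(j+1) r` -/
noncomputable def RR (r : ℝ) (j : ℕ) : ℝ := 2 ^ (j + 1) * r

lemma RR_pos {r : ℝ} (hr : 0 < r) (j : ℕ) : 0 < RR r j := by unfold RR; positivity

lemma RR_succ (r : ℝ) (j : ℕ) : RR r (j + 1) = 2 * RR r j := by unfold RR; ring

lemma RR_ge {r : ℝ} (hr : 0 < r) (j : ℕ) : 2 * r ≤ RR r j := by
  unfold RR
  rw [pow_succ]
  have : (1 : ℝ) ≤ 2 ^ j := one_le_pow₀ (by norm_num)
  nlinarith

lemma far {n : ℕ} (β : ℝ) (hβ : 0 < β) (p q p' : ℝ) (hp : 1 < p) (hp' : 1 / p + 1 / p' = 1)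
    (hp0' : 0 < p')
    (w : EuclideanSpace ℝ (Fin n) → ℝ) (hwm : Measurable w)
    (hw : ∀ᵐ x ∂volume, 0 < w x) (C : ℝ≥0∞)
    (hσ : ∀ (z : EuclideanSpace ℝ (Fin n)) r, 0 < r → wm w (-p') (ball z r) ≠ 0 ∧
      wm w (-p') (ball z r) ≠ ⊤)
    (hrho : ∀ (z : EuclideanSpace ℝ (Fin n)) r, 0 < r → (ENNReal.ofReal (r ^ β))⁻¹ ≤
      C * (wm w q (ball z r) ^ (-(1 / q)) * wm w (-p') (ball z r) ^ (-(1 - 1 / p))))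
    (f : EuclideanSpace ℝ (Fin n) → ℝ) (hf : Measurable f) (a : EuclideanSpace ℝ (Fin n)) (r : ℝ)
    (hr : 0 < r) (x : EuclideanSpace ℝ (Fin n)) (hx : x ∈ ball a r) :
    ∫⁻ y, ENNReal.ofReal |f y| * ker β x y ≤
      (∫⁻ y in ball a (2 * r), ENNReal.ofReal |f y| * ker β x y) +
      ENNReal.ofReal (4 ^ β) * C * ∑' j, wLp p (fun x => w x ^ p) f (ball a (RR r (j + 1))) *
        wm w q (ball a (RR r (j + 1))) ^ (-(1 / q)) := by
  rw [mem_ball] at hx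
  have hem : Measurable fun y => ENNReal.ofReal |f y| :=
    (continuous_abs.measurable.comp hf).ennreal_ofReal
  have hcov : (univ : Set (EuclideanSpace ℝ (Fin n))) ⊆
      ball a (2 * r) ∪ ⋃ j, (ball a (RR r (j + 1)) \ ball a (RR r j)) := by
    intro y _
    by_contra hy
    simp only [mem_union, mem_iUnion, not_or, not_exists, Set.mem_sdiff, not_and, not_not] at hy
    obtain ⟨h0, h1⟩ := hy
    have hall : ∀ j, y ∉ ball a (RR r j) := by
      intro j
      induction j with
      | zero => simpa [RR] using h0
      | succ j ih => exact fun h => ih (h1 j h)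
    obtain ⟨j, hj⟩ := pow_unbounded_of_one_lt (dist y a / r) (one_lt_two)
    refine hall j ?_
    rw [mem_ball]
    rw [div_lt_iff₀ hr] at hj
    unfold RR
    rw [pow_succ]
    have : (0 : ℝ) < 2 ^ j * r := by positivity
    linarith
  have hann : ∀ j, ∫⁻ y in ball a (RR r (j + 1)) \ ball a (RR r j),
      ENNReal.ofReal |f y| * ker β x y ≤ ENNReal.ofReal (4 ^ β) * C *
        (wLp p (fun x => w x ^ p) f (ball a (RR r (j + 1))) *
        wm w q (ball a (RR r (j + 1))) ^ (-(1 / q))) := by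
    intro j
    have hR := RR_pos hr (j + 1)
    obtain ⟨hs0, hst⟩ := hσ a _ hR
    set ρ := RR r (j + 1) with hρ
    have hRj : RR r j = ρ / 2 := by rw [hρ, RR_succ]; ring
    have hge := RR_ge hr j
    have hk : ∀ y ∈ ball a ρ \ ball a (RR r j), ENNReal.ofReal |f y| * ker β x y ≤
        (ENNReal.ofReal (4 ^ β) * (ENNReal.ofReal (ρ ^ β))⁻¹) * ENNReal.ofReal |f y| := by
      intro y hy
      have hy2 : RR r j ≤ dist y a := by simpa using hy.2
      have hd : ρ / 4 ≤ dist x y := by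
        have := dist_triangle y x a
        rw [dist_comm y x] at this
        linarith
      rw [mul_comm]
      gcongr
      unfold ker
      have h4 : (0 : ℝ) < 4 ^ β := by positivity
      have h40 : ENNReal.ofReal (4 ^ β) ≠ 0 := by simpa using h4
      have e4 : ρ ^ β = 4 ^ β * (ρ / 4) ^ β := by
        rw [← Real.mul_rpow (by norm_num) (by positivity)]; congr 1; ring
      rw [e4, ENNReal.ofReal_mul h4.le, ENNReal.mul_inv (Or.inl h40) (Or.inl (by simp)),
        ← mul_assoc, ENNReal.mul_inv_cancel h40 (by simp), one_mul, ENNReal.inv_le_inv]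
      exact ENNReal.ofReal_le_ofReal (Real.rpow_le_rpow (by positivity) hd hβ.le)
    calc _ ≤ ∫⁻ y in ball a ρ \ ball a (RR r j),
          (ENNReal.ofReal (4 ^ β) * (ENNReal.ofReal (ρ ^ β))⁻¹) * ENNReal.ofReal |f y| :=
          setLIntegral_mono' (measurableSet_ball.diff measurableSet_ball) hk
      _ ≤ ∫⁻ y in ball a ρ,
          (ENNReal.ofReal (4 ^ β) * (ENNReal.ofReal (ρ ^ β))⁻¹) * ENNReal.ofReal |f y| :=
          lintegral_mono_set sdiff_subset
      _ = (ENNReal.ofReal (4 ^ β) * (ENNReal.ofReal (ρ ^ β))⁻¹) *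
          ∫⁻ y in ball a ρ, ENNReal.ofReal |f y| := lintegral_const_mul _ hem
      _ ≤ (ENNReal.ofReal (4 ^ β) * (C * (wm w q (ball a ρ) ^ (-(1 / q)) *
            wm w (-p') (ball a ρ) ^ (-(1 - 1 / p))))) *
          (wLp p (fun x => w x ^ p) f (ball a ρ) * wm w (-p') (ball a ρ) ^ (1 - 1 / p)) := by
          gcongr
          · exact hrho a ρ hR
          · exact hol p p' hp hp' hp0' w hwm hw f hf _ measurableSet_ball
      _ = (wm w (-p') (ball a ρ) ^ (-(1 - 1 / p)) * wm w (-p') (ball a ρ) ^ (1 - 1 / p)) *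
          (ENNReal.ofReal (4 ^ β) * C * (wLp p (fun x => w x ^ p) f (ball a ρ) *
          wm w q (ball a ρ) ^ (-(1 / q)))) := by ring
      _ = _ := by
          rw [← ENNReal.rpow_add _ _ hs0 hst]; simp
  calc ∫⁻ y, ENNReal.ofReal |f y| * ker β x y
      = ∫⁻ y in univ, ENNReal.ofReal |f y| * ker β x y := by rw [Measure.restrict_univ]
    _ ≤ ∫⁻ y in ball a (2 * r) ∪ ⋃ j, (ball a (RR r (j + 1)) \ ball a (RR r j)),
          ENNReal.ofReal |f y| * ker β x y := lintegral_mono_set hcov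
    _ ≤ _ := lintegral_union_le _ _ _
    _ ≤ _ := by
        gcongr
        refine (lintegral_iUnion_le _ _).trans ?_
        rw [← ENNReal.tsum_mul_left]
        exact ENNReal.tsum_le_tsum hann

lemma dini {n : ℕ} (p q : ℝ) (hp : 0 < p) (hq : 0 < q) (w f : EuclideanSpace ℝ (Fin n) → ℝ)
    (D η : ℝ≥0∞) (hu : Dbl (wm w q) D η) (a : EuclideanSpace ℝ (Fin n)) (r : ℝ) (hr : 0 < r) :
    ∑' j, wLp p (fun x => w x ^ p) f (ball a (RR r j)) * wm w q (ball a (RR r j)) ^ (-(1 / q)) ≤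
    2 * D ^ (1 / q) * ∫⁻ t in Ioi r, wLp p (fun x => w x ^ p) f (ball a t) *
      wm w q (ball a t) ^ (-(1 / q)) * ENNReal.ofReal t⁻¹ := by
  have hq1 : 0 < 1 / q := by positivity
  obtain ⟨hDt, -, hall⟩ := hu
  have hD0 : D ≠ 0 := by
    rintro rfl
    obtain ⟨-, -, h, -⟩ := hall a r hr
    have h2 := (hall a (2 * r) (by linarith)).1
    rw [zero_mul] at h
    exact h2 (by simpa using h)
  have hDq0 : D ^ (1 / q) ≠ 0 := by simp [ENNReal.rpow_eq_zero_iff, hD0, hDt]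
  have hDqt : D ^ (1 / q) ≠ ⊤ := ENNReal.rpow_ne_top_of_nonneg hq1.le hDt
  set G : ℝ → ℝ≥0∞ := fun t => wLp p (fun x => w x ^ p) f (ball a t) *
      wm w q (ball a t) ^ (-(1 / q)) with hG
  have hstep : ∀ R, 0 < R → G R ≤ 2 * D ^ (1 / q) *
      ∫⁻ t in Ioc R (2 * R), G t * ENNReal.ofReal t⁻¹ := by
    intro R hR
    have hlow : ∀ t ∈ Ioc R (2 * R),
        G R * (D ^ (1 / q))⁻¹ * ENNReal.ofReal (2 * R)⁻¹ ≤ G t * ENNReal.ofReal t⁻¹ := by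
      intro t ht
      have ht0 : 0 < t := hR.trans ht.1
      have h1 : wm w q (ball a t) ≤ D * wm w q (ball a R) :=
        (measure_mono (ball_subset_ball ht.2)).trans (hall a R hR).2.2.1
      have h2 : wm w q (ball a R) ^ (-(1 / q)) * (D ^ (1 / q))⁻¹ ≤
          wm w q (ball a t) ^ (-(1 / q)) := by
        rw [ENNReal.rpow_neg, ENNReal.rpow_neg, ← ENNReal.mul_inv (Or.inr hDqt) (Or.inr hDq0),
          ENNReal.inv_le_inv, mul_comm, ← ENNReal.mul_rpow_of_nonneg _ _ hq1.le]
        exact ENNReal.rpow_le_rpow h1 hq1.le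
      have h3 : wLp p (fun x => w x ^ p) f (ball a R) ≤ wLp p (fun x => w x ^ p) f (ball a t) :=
        wLp_mono p hp _ f (ball_subset_ball ht.1.le)
      simp only [hG]
      rw [mul_assoc (wLp _ _ _ _)]
      gcongr
      exact ht.2
    have hIle := setLIntegral_mono' (μ := volume) measurableSet_Ioc hlow
    rw [setLIntegral_const, Real.volume_Ioc] at hIle
    have h2R : (2 : ℝ≥0∞) * (ENNReal.ofReal (2 * R)⁻¹ * ENNReal.ofReal (2 * R - R)) = 1 := by
      have : (2 : ℝ≥0∞) = ENNReal.ofReal 2 := by simp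
      rw [this, ← ENNReal.ofReal_mul (by positivity), ← ENNReal.ofReal_mul (by norm_num)]
      have : 2 * ((2 * R)⁻¹ * (2 * R - R)) = 1 := by field_simp; ring
      rw [this]; simp
    calc G R = (2 * (ENNReal.ofReal (2 * R)⁻¹ * ENNReal.ofReal (2 * R - R))) *
          (D ^ (1 / q) * (D ^ (1 / q))⁻¹) * G R := by
          rw [h2R, ENNReal.mul_inv_cancel hDq0 hDqt]; simp
      _ = 2 * D ^ (1 / q) * (G R * (D ^ (1 / q))⁻¹ * ENNReal.ofReal (2 * R)⁻¹ *
          ENNReal.ofReal (2 * R - R)) := by ring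
      _ ≤ _ := by gcongr
  have hmono : Monotone (RR r) := monotone_nat_of_le_succ fun j => by
    rw [RR_succ]; have := RR_pos hr j; linarith
  have hdis : Pairwise (Function.onFun Disjoint fun j => Ioc (RR r j) (RR r (j + 1))) :=
    hmono.pairwise_disjoint_on_Ioc_succ
  calc ∑' j, G (RR r j) ≤ ∑' j, 2 * D ^ (1 / q) *
        ∫⁻ t in Ioc (RR r j) (RR r (j + 1)), G t * ENNReal.ofReal t⁻¹ := by
        refine ENNReal.tsum_le_tsum fun j => ?_
        rw [RR_succ]; exact hstep _ (RR_pos hr j)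
    _ = 2 * D ^ (1 / q) * ∑' j,
        ∫⁻ t in Ioc (RR r j) (RR r (j + 1)), G t * ENNReal.ofReal t⁻¹ := ENNReal.tsum_mul_left
    _ = 2 * D ^ (1 / q) *
        ∫⁻ t in ⋃ j, Ioc (RR r j) (RR r (j + 1)), G t * ENNReal.ofReal t⁻¹ := by
        rw [lintegral_iUnion (fun j => measurableSet_Ioc) hdis]
    _ ≤ _ := by
        gcongr
        refine iUnion_subset fun j t ht => ?_
        have := RR_ge hr j
        exact lt_of_le_of_lt (by linarith) ht.1

end MW
/-- Let `0 < α < n`, `1 < p < n/α`, `1/q = 1/p − α/n`, `w ∈ A_{p,q}`, and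
let `ψ₁, ψ₂` be positive functions on `ℝⁿ × (0,∞)` with
`∫_r^∞ (w^p(B(a,t))^{1/p}/w^q(B(a,t))^{1/q})·ψ₁(a,t) dt/t ≤ C·ψ₂(a,r)` for all `(a,r)`.
Then `I_α` is bounded from `M^{p,w^p}_{ψ₁}` to `M^{q,w^q}_{ψ₂}`. -/
theorem statement14 {n : ℕ} (α p q p' : ℝ) (hα : 0 < α) (hαn : α < n)
    (hp : 1 < p) (hpn : p < (n : ℝ) / α) (hq : 1 / q = 1 / p - α / n)
    (hp' : 1 / p + 1 / p' = 1)
    (w : EuclideanSpace ℝ (Fin n) → ℝ) (hw : IsWeight w) (hApq : MuckApq p q p' w)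
    (ψ₁ ψ₂ : EuclideanSpace ℝ (Fin n) → ℝ → ℝ)
    (hψ₁ : ∀ a r, 0 < r → 0 < ψ₁ a r) (hψ₂ : ∀ a r, 0 < r → 0 < ψ₂ a r)
    (C : ℝ) (hC : 0 < C)
    (hcond : ∀ (a : EuclideanSpace ℝ (Fin n)) (r : ℝ), 0 < r →
      (∫⁻ t in Set.Ioi r,
        wSet (fun x => w x ^ p) (ball a t) ^ (1 / p) *
          wSet (fun x => w x ^ q) (ball a t) ^ (-(1 / q)) *
          ENNReal.ofReal (ψ₁ a t) * ENNReal.ofReal t⁻¹) ≤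
        ENNReal.ofReal (C * ψ₂ a r)) :
    ∃ C' : ℝ, 0 < C' ∧ ∀ f : EuclideanSpace ℝ (Fin n) → ℝ,
      MemLocWLp p (fun x => w x ^ p) f → morreyNorm p (fun x => w x ^ p) ψ₁ f < ⊤ →
      morreyNormE q (fun x => w x ^ q) ψ₂ (fracIntE α f) ≤
        ENNReal.ofReal C' * morreyNorm p (fun x => w x ^ p) ψ₁ f := by
  have hn0 : (0 : ℝ) < n := by linarith
  have hn : 0 < n := by exact_mod_cast hn0
  have hp0 : 0 < p := by linarith
  have hβ : 0 < (n : ℝ) - α := by linarith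
  have hq1 : 0 < 1 / q := by
    rw [hq]
    rw [lt_div_iff₀ hα] at hpn
    have : α / n < 1 / p := by rw [div_lt_div_iff₀ hn0 hp0]; linarith
    linarith
  have hq0 : 0 < q := by simpa using hq1
  have hpq : p < q := by
    have : 1 / q < 1 / p := by
      rw [hq]; have : 0 < α / n := by positivity
      linarith
    exact (one_div_lt_one_div hq0 hp0).1 this
  have hp1' : 0 < 1 / p' := by
    have : 1 / p < 1 := by rw [div_lt_one hp0]; exact hp
    linarith
  have hp0' : 0 < p' := by simpa using hp1'
  obtain ⟨hwm, -, -, hwp⟩ := hw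
  obtain ⟨D, η, D', η', C2, hσ, hu, hC2, hrho⟩ := MW.wm_facts α p q p' hα hαn hp hq0 hpq hq hp0' hp'
    w hwm hwp hApq
  obtain ⟨K, hK, hstr⟩ := MW.strong ((n : ℝ) - α) hβ (MW.wm w (-p')) (MW.wm w q)
    (MW.wm_atom hn w (-p')) D η D' η' hσ hu p q hp hpq C2 hC2 hrho
  have hDqt : D' ^ (1 / q) ≠ ⊤ := ENNReal.rpow_ne_top_of_nonneg hq1.le hu.1
  -- total constant
  set c1 : ℝ≥0∞ := K * D' ^ (1 / q) + ENNReal.ofReal (4 ^ ((n : ℝ) - α)) * C2 with hc1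
  have hc1t : c1 ≠ ⊤ := by
    simp only [hc1]
    exact ENNReal.add_ne_top.2 ⟨ENNReal.mul_ne_top hK hDqt, ENNReal.mul_ne_top (by simp) hC2⟩
  set c2 : ℝ≥0∞ := c1 * (2 * D' ^ (1 / q)) * ENNReal.ofReal C with hc2
  have hc2t : c2 ≠ ⊤ := ENNReal.mul_ne_top (ENNReal.mul_ne_top hc1t
    (ENNReal.mul_ne_top (by simp) hDqt)) (by simp)
  refine ⟨c2.toReal + 1, by positivity, ?_⟩
  intro f hf hN
  have hfm : Measurable f := hf.1
  set N := morreyNorm p (fun x => w x ^ p) ψ₁ f with hNdef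
  have hc2le : c2 ≤ ENNReal.ofReal (c2.toReal + 1) := by
    calc c2 = ENNReal.ofReal c2.toReal := (ENNReal.ofReal_toReal hc2t).symm
      _ ≤ _ := ENNReal.ofReal_le_ofReal (by linarith)
  refine le_trans ?_ (mul_le_mul_left hc2le N)
  unfold morreyNormE
  refine iSup_le fun a => iSup_le fun ⟨r, hr⟩ => ?_
  change 0 < r at hr
  simp only
  rw [MW.wSet_eq]
  set G : ℝ → ℝ≥0∞ := fun t => wLp p (fun x => w x ^ p) f (ball a t) *
      MW.wm w q (ball a t) ^ (-(1 / q)) with hG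
  set S := ∑' j, G (MW.RR r j) with hS
  obtain ⟨hu0, hut, hdbl, -⟩ := hu.2.2 a r hr
  obtain ⟨hu0', hut', -, -⟩ := hu.2.2 a (2 * r) (by linarith)
  have hR0 : MW.RR r 0 = 2 * r := by unfold MW.RR; ring
  have hS0 : G (2 * r) ≤ S := by
    rw [hS, ← hR0]; exact ENNReal.le_tsum (f := fun j => G (MW.RR r j)) 0
  have hS1 : ∑' j, G (MW.RR r (j + 1)) ≤ S := by
    rw [hS]
    exact ENNReal.tsum_comp_le_tsum_of_injective (add_left_injective 1) (fun j => G (MW.RR r j))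
  -- the local estimate
  have hloc : wLpE q (fun x => w x ^ q) (fracIntE α f) (ball a r) ≤
      c1 * S * MW.wm w q (ball a r) ^ (1 / q) := by
    set c : ℝ≥0∞ := ENNReal.ofReal (4 ^ ((n : ℝ) - α)) * C2 * ∑' j, G (MW.RR r (j + 1)) with hc
    set Nr : EuclideanSpace ℝ (Fin n) → ℝ≥0∞ := fun x =>
      ∫⁻ y in ball a (2 * r), ENNReal.ofReal |f y| * MW.ker ((n : ℝ) - α) x y with hNr
    have hem : Measurable fun y => ENNReal.ofReal |f y| :=
      (continuous_abs.measurable.comp hfm).ennreal_ofReal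
    have hNm : Measurable Nr :=
      Measurable.lintegral_prod_right'
        (f := fun P : EuclideanSpace ℝ (Fin n) × EuclideanSpace ℝ (Fin n) =>
          ENNReal.ofReal |f P.2| * MW.ker ((n : ℝ) - α) P.1 P.2)
        ((hem.comp measurable_snd).mul (MW.ker_meas _))
    have hpt : ∀ x ∈ ball a r, fracIntE α f x ≤ Nr x + c := by
      intro x hx
      have h := MW.far ((n : ℝ) - α) hβ p q p' hp hp' hp0' w hwm hwp C2
        (fun z ρ hρ => ⟨(hσ.2.2 z ρ hρ).1, (hσ.2.2 z ρ hρ).2.1⟩) hrho f hfm a r hr x hx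
      exact h
    have hden : ∀ g : EuclideanSpace ℝ (Fin n) → ℝ≥0∞,
        ∫⁻ x in ball a r, g x * ENNReal.ofReal (w x ^ q) =
          ∫⁻ x in ball a r, g x ∂(MW.wm w q) := by
      intro g
      unfold MW.wm
      rw [restrict_withDensity measurableSet_ball,
        lintegral_withDensity_eq_lintegral_mul_non_measurable _
          (hwm.pow_const q).ennreal_ofReal (by simp)]
      exact lintegral_congr fun x => mul_comm _ _
    calc wLpE q (fun x => w x ^ q) (fracIntE α f) (ball a r)
        = (∫⁻ x in ball a r, fracIntE α f x ^ q ∂(MW.wm w q)) ^ (1 / q) := by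
          unfold wLpE; rw [hden]
      _ ≤ (∫⁻ x in ball a r, (Nr x + c) ^ q ∂(MW.wm w q)) ^ (1 / q) := by
          refine ENNReal.rpow_le_rpow (setLIntegral_mono' measurableSet_ball fun x hx => ?_) hq1.le
          exact ENNReal.rpow_le_rpow (hpt x hx) hq0.le
      _ ≤ (∫⁻ x in ball a r, Nr x ^ q ∂(MW.wm w q)) ^ (1 / q) +
          (∫⁻ x in ball a r, c ^ q ∂(MW.wm w q)) ^ (1 / q) :=
          ENNReal.lintegral_Lp_add_le hNm.aemeasurable aemeasurable_const (by linarith)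
      _ ≤ K * wLp p (fun x => w x ^ p) f (ball a (2 * r)) +
          c * MW.wm w q (ball a r) ^ (1 / q) := by
          refine add_le_add ?_ ?_
          · refine le_trans (ENNReal.rpow_le_rpow (setLIntegral_le_lintegral _ _) hq1.le) ?_
            exact MW.near ((n : ℝ) - α) p q p' hp hp' hp0' w hwm hwp K hstr f hfm _
              measurableSet_ball
          · rw [setLIntegral_const, ENNReal.mul_rpow_of_nonneg _ _ hq1.le, ← ENNReal.rpow_mul]
            simp [hq0.ne']
      _ ≤ K * (D' ^ (1 / q) * S * MW.wm w q (ball a r) ^ (1 / q)) +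
          (ENNReal.ofReal (4 ^ ((n : ℝ) - α)) * C2 * S) * MW.wm w q (ball a r) ^ (1 / q) := by
          gcongr
          calc wLp p (fun x => w x ^ p) f (ball a (2 * r))
              = G (2 * r) * MW.wm w q (ball a (2 * r)) ^ (1 / q) := by
                simp only [hG]
                rw [mul_assoc, ← ENNReal.rpow_add _ _ hu0' hut']; simp
            _ ≤ S * (D' * MW.wm w q (ball a r)) ^ (1 / q) := by gcongr
            _ = _ := by rw [ENNReal.mul_rpow_of_nonneg _ _ hq1.le]; ring
          rw [hc]
          exact mul_le_mul_right hS1 _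
      _ = _ := by rw [hc1]; ring
  -- the sum is controlled by the Dini integral
  have hdini : S ≤ 2 * D' ^ (1 / q) * ∫⁻ t in Ioi r, G t * ENNReal.ofReal t⁻¹ :=
    MW.dini p q hp0 hq0 w f D' η' hu a r hr
  have hIle : ∫⁻ t in Ioi r, G t * ENNReal.ofReal t⁻¹ ≤ N * ENNReal.ofReal (C * ψ₂ a r) := by
    refine le_trans ?_ (mul_le_mul_right (hcond a r hr) N)
    rw [← lintegral_const_mul' _ _ hN.ne]
    refine setLIntegral_mono' measurableSet_Ioi fun t ht => ?_
    have ht0 : 0 < t := hr.trans ht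
    have hW0 : MW.wm w p (ball a t) ≠ 0 := MW.wm_ball_ne_zero w hwm hwp p a ht0
    have hWt : MW.wm w p (ball a t) ≠ ⊤ := by
      have hle : MW.wm w p (ball a t) ≤ volume (ball a t) + MW.wm w q (ball a t) := by
        unfold MW.wm
        rw [withDensity_apply _ measurableSet_ball, withDensity_apply _ measurableSet_ball]
        calc _ ≤ ∫⁻ x in ball a t, (1 + ENNReal.ofReal (w x ^ q)) := by
              refine lintegral_mono_ae (ae_restrict_of_ae (hwp.mono fun x hx => ?_))
              have h1 : w x ^ p ≤ 1 + w x ^ q := by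
                rcases le_total (w x) 1 with h | h
                · have := Real.rpow_le_one hx.le h hp0.le
                  have := Real.rpow_pos_of_pos hx q
                  linarith
                · have := Real.rpow_le_rpow_of_exponent_le h hpq.le
                  linarith
              calc ENNReal.ofReal (w x ^ p) ≤ ENNReal.ofReal (1 + w x ^ q) :=
                    ENNReal.ofReal_le_ofReal h1
                _ = _ := by
                    rw [ENNReal.ofReal_add zero_le_one (Real.rpow_pos_of_pos hx q).le]; simp
          _ = _ := by rw [lintegral_add_left measurable_const]; simp
      exact ne_top_of_le_ne_top
        (ENNReal.add_ne_top.2 ⟨MW.vol_ne_top a t, (hu.2.2 a t ht0).2.1⟩) hle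
    rw [MW.wSet_eq, MW.wSet_eq]
    have hNle : (ENNReal.ofReal (ψ₁ a t))⁻¹ * MW.wm w p (ball a t) ^ (-(1 / p)) *
        wLp p (fun x => w x ^ p) f (ball a t) ≤ N := by
      rw [← MW.wSet_eq, hNdef]
      unfold morreyNorm
      exact le_iSup_of_le a (le_iSup_of_le (⟨t, ht0⟩ : Set.Ioi (0 : ℝ)) le_rfl)
    have hψ0 : ENNReal.ofReal (ψ₁ a t) ≠ 0 := by simpa using hψ₁ a t ht0
    have hLp : wLp p (fun x => w x ^ p) f (ball a t) ≤
        N * (MW.wm w p (ball a t) ^ (1 / p) * ENNReal.ofReal (ψ₁ a t)) := by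
      calc wLp p (fun x => w x ^ p) f (ball a t)
          = ((ENNReal.ofReal (ψ₁ a t))⁻¹ * ENNReal.ofReal (ψ₁ a t)) *
            (MW.wm w p (ball a t) ^ (-(1 / p)) * MW.wm w p (ball a t) ^ (1 / p)) *
            wLp p (fun x => w x ^ p) f (ball a t) := by
            rw [ENNReal.inv_mul_cancel hψ0 (by simp), ← ENNReal.rpow_add _ _ hW0 hWt]; simp
        _ = ((ENNReal.ofReal (ψ₁ a t))⁻¹ * MW.wm w p (ball a t) ^ (-(1 / p)) *
            wLp p (fun x => w x ^ p) f (ball a t)) *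
            (MW.wm w p (ball a t) ^ (1 / p) * ENNReal.ofReal (ψ₁ a t)) := by ring
        _ ≤ _ := by gcongr
    calc G t * ENNReal.ofReal t⁻¹ ≤
          (N * (MW.wm w p (ball a t) ^ (1 / p) * ENNReal.ofReal (ψ₁ a t))) *
            MW.wm w q (ball a t) ^ (-(1 / q)) * ENNReal.ofReal t⁻¹ := by
          simp only [hG]; gcongr
      _ = _ := by ring
  have hψ0 : ENNReal.ofReal (ψ₂ a r) ≠ 0 := by simpa using hψ₂ a r hr
  calc _ ≤ (ENNReal.ofReal (ψ₂ a r))⁻¹ * MW.wm w q (ball a r) ^ (-(1 / q)) *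
        (c1 * (2 * D' ^ (1 / q) * (N * ENNReal.ofReal (C * ψ₂ a r))) *
          MW.wm w q (ball a r) ^ (1 / q)) := by
        refine mul_le_mul_right (hloc.trans ?_) _
        gcongr
        exact hdini.trans (mul_le_mul_right hIle _)
    _ = ((ENNReal.ofReal (ψ₂ a r))⁻¹ * ENNReal.ofReal (ψ₂ a r)) *
        (MW.wm w q (ball a r) ^ (-(1 / q)) * MW.wm w q (ball a r) ^ (1 / q)) * (c2 * N) := by
        rw [ENNReal.ofReal_mul hC.le, hc2]; ring
    _ = c2 * N := by
        rw [ENNReal.inv_mul_cancel hψ0 (by simp), ← ENNReal.rpow_add _ _ hu0 hut]; simp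
    _ ≤ _ := le_rfl
end
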